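/- arXiv:1201.0514 — 4 statements merged into one kernel-verified Lean document; each statement's English description precedes it below -/
import Mathlib

section
/- Fix n ≥ 1, an additive Haar measure μ on the real vector space Sym_n(ℝ) of n×n real symmetric matrices, a real η > n−1, an n×n real symmetric positive definite matrix Σ, and an n×n real symmetric matrix z such that Σ⁻¹ + 2z is positive definite. Then the integrals ∫ exp(−tr(z·x)) w_{η,Σ}(x) dμ(x) and ∫ w_{η,Σ}(x) dμ(x) are finite and positive, and ∫ exp(−tr(z·x)) w_{η,Σ}(x) dμ(x) = det(1 + 2·Σ·z)^{−η/2} · ∫ w_{η,Σ}(x) dμ(x), where the power is a real power of the positive real number det(1 + 2·Σ·z). -/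
open MeasureTheory
open scoped ENNReal Matrix

instance matrixMeasurableSpace {m n α : Type*} [MeasurableSpace α] :
    MeasurableSpace (Matrix m n α) := by unfold Matrix; infer_instance

/-- The real vector space `Sym_n(ℝ)` of `n × n` real symmetric matrices,
as a submodule of the matrix space. -/
def symMatSubmodule (n : ℕ) : Submodule ℝ (Matrix (Fin n) (Fin n) ℝ) where
  carrier := {x | x.IsSymm}
  add_mem' := fun {a b} ha hb => by
    have ha' : aᵀ = a := ha
    have hb' : bᵀ = b := hb
    show (a + b)ᵀ = a + b
    rw [Matrix.transpose_add, ha', hb']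
  zero_mem' := Matrix.transpose_zero
  smul_mem' := fun c a ha => by
    have ha' : aᵀ = a := ha
    show (c • a)ᵀ = c • a
    rw [Matrix.transpose_smul, ha']

/-- `SymMat n` : the type of `n × n` real symmetric matrices. -/
abbrev SymMat (n : ℕ) : Type := ↥(symMatSubmodule n)

open Classical in
/-- The (unnormalized) Wishart density with shape `η` and scale `S` on `Sym_n(ℝ)`:
`exp(−tr(S⁻¹x)/2)·det(x)^{η/2−(n+1)/2}` on positive definite `x`, `0` elsewhere. -/
noncomputable def wishartDensity (n : ℕ) (η : ℝ) (S : Matrix (Fin n) (Fin n) ℝ)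
    (x : SymMat n) : ℝ :=
  if (x : Matrix (Fin n) (Fin n) ℝ).PosDef then
    Real.exp (-(S⁻¹ * (x : Matrix (Fin n) (Fin n) ℝ)).trace / 2) *
      (x : Matrix (Fin n) (Fin n) ℝ).det ^ (η / 2 - ((n : ℝ) + 1) / 2)
  else 0

instance matrixBorelSpace {m n : Type*} [Countable m] [Countable n] :
    BorelSpace (Matrix m n ℝ) :=
  inferInstanceAs (BorelSpace (m → n → ℝ))

namespace SymMat

open Matrix

variable {n : ℕ}

/-- A symmetric matrix is the same as a function on unordered pairs of indices. -/
def coordEquiv (n : ℕ) : SymMat n ≃ₗ[ℝ] (Sym2 (Fin n) → ℝ) where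
  toFun x p := Sym2.lift ⟨fun i j => x.1 i j, fun i j => x.2.apply j i⟩ p
  map_add' x y := by
    ext p
    induction p with | _ i j => simp
  map_smul' c x := by
    ext p
    induction p with | _ i j => simp
  invFun f := ⟨.of fun i j => f s(i, j), by
    ext i j
    simp [Sym2.eq_swap]⟩
  left_inv x := by
    ext i j
    simp
  right_inv f := by
    ext p
    induction p with | _ i j => simp

@[simp]
lemma coordEquiv_apply_mk (x : SymMat n) (i j : Fin n) : coordEquiv n x s(i, j) = x.1 i j := rfl

instance : FiniteDimensional ℝ (SymMat n) := (coordEquiv n).symm.finiteDimensional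

instance : SecondCountableTopology (SymMat n) :=
  (coordEquiv n).toContinuousLinearEquiv.toHomeomorph.secondCountableTopology

instance : LocallyCompactSpace (SymMat n) :=
  (coordEquiv n).toContinuousLinearEquiv.toHomeomorph.isClosedEmbedding.locallyCompactSpace

lemma map_linearMap_addHaar (μ : Measure (SymMat n)) [μ.IsAddHaarMeasure]
    {f : SymMat n →ₗ[ℝ] SymMat n} (hf : LinearMap.det f ≠ 0) :
    μ.map f = ENNReal.ofReal |(LinearMap.det f)⁻¹| • μ := by
  let e := (coordEquiv n).toContinuousLinearEquiv
  have hdet : LinearMap.det ((coordEquiv n).toLinearMap ∘ₗ f ∘ₗ (coordEquiv n).symm.toLinearMap) =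
    LinearMap.det f := LinearMap.det_conj f (coordEquiv n)
  have h := Measure.map_linearMap_addHaar_pi_eq_smul_addHaar
    (f := (coordEquiv n).toLinearMap ∘ₗ f ∘ₗ (coordEquiv n).symm.toLinearMap) (by rwa [hdet]) (μ.map e)
  have hfm : Measurable f := f.continuous_of_finiteDimensional.measurable
  have hem : Measurable e := e.continuous.measurable
  have hem' : Measurable e.symm := e.symm.continuous.measurable
  have hcomp : e.symm ∘ e = id := by ext1; simp
  have h2 := congrArg (Measure.map e.symm) h
  rw [hdet, Measure.map_smul, Measure.map_map hem' hem, hcomp, Measure.map_id,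
    Measure.map_map _ hem, Measure.map_map hem'] at h2
  · convert h2 using 2
    ext1 x
    simp [e]
  · exact (hem.comp (hfm.comp hem')).comp hem
  · exact hem.comp (hfm.comp hem')

/-- The congruence action `x ↦ B x Bᵀ` on symmetric matrices. -/
def congruence (B : Matrix (Fin n) (Fin n) ℝ) : SymMat n →ₗ[ℝ] SymMat n where
  toFun x := ⟨B * x.1 * Bᵀ, by
    have hx : x.1ᵀ = x.1 := x.2
    change (B * x.1 * Bᵀ)ᵀ = B * x.1 * Bᵀ
    simp [Matrix.transpose_mul, hx, Matrix.mul_assoc]⟩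
  map_add' x y := by
    ext1
    simp [Matrix.mul_add, Matrix.add_mul]
  map_smul' c x := by
    ext1
    simp

@[simp]
lemma coe_congruence (B : Matrix (Fin n) (Fin n) ℝ) (x : SymMat n) :
    (congruence B x : Matrix (Fin n) (Fin n) ℝ) = B * x.1 * Bᵀ := rfl

lemma congruence_mul (A B : Matrix (Fin n) (Fin n) ℝ) :
    congruence (A * B) = congruence A ∘ₗ congruence B := by
  ext1 x
  ext1
  simp [Matrix.mul_assoc]

lemma congruence_one : congruence (1 : Matrix (Fin n) (Fin n) ℝ) = LinearMap.id := by
  ext1 x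
  ext1
  simp

lemma prod_sym2_mul (d : Fin n → ℝ) :
    ∏ p : Sym2 (Fin n), Sym2.lift ⟨fun i j => d i * d j, fun _ _ => mul_comm _ _⟩ p =
      (∏ i, d i) ^ (n + 1) := by
  have h1 : ∏ p : Sym2 (Fin n), Sym2.lift ⟨fun i j => d i * d j, fun _ _ => mul_comm _ _⟩ p =
      ∏ p : Fin n × Fin n with p.1 ≤ p.2, d p.1 * d p.2 := by
    rw [← Finset.prod_subtype_eq_prod_filter
      (s := Finset.univ) (p := fun p : Fin n × Fin n => p.1 ≤ p.2)]
    simp only [Finset.subtype_univ]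
    refine Fintype.prod_equiv Sym2.sortEquiv _ _ fun p => ?_
    induction p with | _ i j =>
    rcases le_total i j with h | h <;> simp [Sym2.sortEquiv, h, mul_comm]
  have h2 : ∏ p : Fin n × Fin n with p.1 ≤ p.2, d p.2 = ∏ p : Fin n × Fin n with p.2 ≤ p.1, d p.1 :=
    Finset.prod_equiv (Equiv.prodComm _ _) (by simp) (by simp)
  have h3 : ({p | p.1 ≤ p.2} : Finset (Fin n × Fin n)) ∪ ({p | p.2 ≤ p.1} : Finset (Fin n × Fin n)) =
      Finset.univ := by
    ext p
    simp [le_total]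
  have h4 : ({p | p.1 ≤ p.2} : Finset (Fin n × Fin n)) ∩ ({p | p.2 ≤ p.1} : Finset (Fin n × Fin n)) =
      Finset.univ.diag := by
    ext p
    simp [le_antisymm_iff]
  rw [h1, Finset.prod_mul_distrib, h2, ← Finset.prod_union_inter, h3, h4, Finset.prod_diag,
    Fintype.prod_prod_type, pow_succ]
  simp [Finset.prod_pow]

lemma det_congruence_diagonal (d : Fin n → ℝ) :
    LinearMap.det (congruence (diagonal d)) = (diagonal d).det ^ (n + 1) := by
  rw [← LinearMap.det_conj _ (coordEquiv n), det_diagonal, ← prod_sym2_mul, ← det_diagonal,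
    ← LinearMap.det_toLin']
  congr 1
  apply LinearMap.ext
  intro f
  ext p
  induction p with | _ i j =>
  simp [mulVec_diagonal, coordEquiv]
  ring

lemma det_congruence_ne_zero {B : Matrix (Fin n) (Fin n) ℝ} (hB : B.det ≠ 0) :
    LinearMap.det (congruence B) ≠ 0 := by
  have h : congruence B⁻¹ ∘ₗ congruence B = LinearMap.id := by
    rw [← congruence_mul, nonsing_inv_mul _ (isUnit_iff_ne_zero.mpr hB), congruence_one]
  have := congrArg LinearMap.det h
  rw [LinearMap.det_comp, LinearMap.det_id] at this
  exact right_ne_zero_of_mul_eq_one this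

lemma diagonal_mul_transvection {i j : Fin n} (hij : i ≠ j) (c : ℝ) :
    diagonal (Function.update 1 i 2) * transvection i j c =
      transvection i j c * transvection i j c * diagonal (Function.update 1 i 2) := by
  rw [transvection_mul_transvection_same _ _ hij]
  ext k l
  by_cases hk : i = k
  · subst hk
    by_cases hl : j = l
    · subst hl
      simp [transvection, Matrix.add_apply, hij, hij.symm]
      ring
    · simp [transvection, Matrix.add_apply, Matrix.one_apply, hl]
      grind
  · simp [transvection, Matrix.add_apply, Matrix.one_apply, hk]
    grind

lemma det_congruence_transvection {i j : Fin n} (hij : i ≠ j) (c : ℝ) :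
    LinearMap.det (congruence (transvection i j c)) = 1 := by
  have h := congrArg (fun B => LinearMap.det (congruence B)) (diagonal_mul_transvection hij c)
  simp only [congruence_mul, LinearMap.det_comp] at h
  have h1 : LinearMap.det (congruence (transvection i j c)) ≠ 0 :=
    det_congruence_ne_zero (by simp [det_transvection_of_ne _ _ hij])
  have h2 : LinearMap.det (congruence (diagonal (Function.update (1 : Fin n → ℝ) i 2))) ≠ 0 :=
    det_congruence_ne_zero (by simp [Finset.prod_update_of_mem])
  rw [mul_comm, mul_left_inj' h2] at h
  exact (mul_eq_left₀ h1).mp h.symm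

lemma det_congruence (B : Matrix (Fin n) (Fin n) ℝ) :
    LinearMap.det (congruence B) = B.det ^ (n + 1) := by
  induction B using diagonal_transvection_induction with
  | hdiag D _ => exact det_congruence_diagonal D
  | htransvec t => 
    simp [TransvectionStruct.toMatrix, det_congruence_transvection t.hij,
      det_transvection_of_ne _ _ t.hij]
  | hmul A B hA hB => rw [congruence_mul, LinearMap.det_comp, hA, hB, det_mul, mul_pow]

end SymMat

namespace SymMat

open Matrix

variable {n : ℕ}

lemma isHermitian (x : SymMat n) : x.1.IsHermitian := by
  have h : x.1ᵀ = x.1 := x.2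
  simpa [IsHermitian, conjTranspose_eq_transpose_of_trivial] using h

lemma isClosed_setOf_posSemidef : IsClosed {x : SymMat n | x.1.PosSemidef} := by
  simp only [posSemidef_iff_dotProduct_mulVec, isHermitian, true_and, Set.ofPred_forall]
  refine isClosed_iInter fun v => isClosed_le continuous_const ?_
  fun_prop

lemma measurableSet_setOf_posDef : MeasurableSet {x : SymMat n | x.1.PosDef} := by
  have h : {x : SymMat n | x.1.PosDef} = {x | x.1.PosSemidef} ∩ {x | x.1.det ≠ 0} := by
    ext x
    exact ⟨fun hx => ⟨hx.posSemidef, hx.det_pos.ne'⟩,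
      fun hx => hx.1.posDef_iff_det_ne_zero.mpr hx.2⟩
  rw [h]
  refine isClosed_setOf_posSemidef.measurableSet.inter ?_
  exact (isOpen_ne_fun (by fun_prop) continuous_const).measurableSet

open Classical in
/-- The density `exp(−tr(x)/2)·det(x)^s` on the cone of positive definite matrices. -/
noncomputable def coneDensity (s : ℝ) (x : SymMat n) : ℝ≥0∞ :=
  if x.1.PosDef then ENNReal.ofReal (Real.exp (-x.1.trace / 2) * x.1.det ^ s) else 0

lemma measurable_coneDensity (s : ℝ) : Measurable (coneDensity s : SymMat n → ℝ≥0∞) := by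
  refine Measurable.ite measurableSet_setOf_posDef ?_ measurable_const
  have h1 : Measurable fun x : SymMat n => x.1.trace := Continuous.measurable (by fun_prop)
  have h2 : Measurable fun x : SymMat n => x.1.det := Continuous.measurable (by fun_prop)
  fun_prop

/-- The block matrix with upper left entry `a`, first row `b` and lower right block `C`. -/
def ofBlocks (n : ℕ) : ((ℝ × (Fin n → ℝ)) × SymMat n) ≃ₗ[ℝ] SymMat (1 + n) where
  toFun p := ⟨(fromBlocks (diagonal fun _ => p.1.1) (replicateRow (Fin 1) p.1.2)
      (replicateRow (Fin 1) p.1.2)ᴴ p.2.1).submatrix finSumFinEquiv.symm finSumFinEquiv.symm, by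
    refine IsSymm.submatrix ?_ _
    refine IsSymm.fromBlocks ?_ ?_ p.2.2
    · simp [IsSymm]
    · simp [conjTranspose_eq_transpose_of_trivial]⟩
  map_add' p q := by
    ext i j
    obtain ⟨i, rfl⟩ := finSumFinEquiv.surjective i
    obtain ⟨j, rfl⟩ := finSumFinEquiv.surjective j
    rcases i with i | i <;> rcases j with j | j <;> simp [diagonal, Fin.fin_one_eq_zero]
  map_smul' c p := by
    ext i j
    obtain ⟨i, rfl⟩ := finSumFinEquiv.surjective i
    obtain ⟨j, rfl⟩ := finSumFinEquiv.surjective j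
    rcases i with i | i <;> rcases j with j | j <;> simp [diagonal, Fin.fin_one_eq_zero]
  invFun x := ((x.1 (finSumFinEquiv (.inl 0)) (finSumFinEquiv (.inl 0)),
    fun j => x.1 (finSumFinEquiv (.inl 0)) (finSumFinEquiv (.inr j))),
    ⟨x.1.submatrix (fun i => finSumFinEquiv (.inr i)) (fun i => finSumFinEquiv (.inr i)),
      IsSymm.submatrix x.2 _⟩)
  left_inv p := by
    ext <;> simp
  right_inv x := by
    ext i j
    obtain ⟨i, rfl⟩ := finSumFinEquiv.surjective i
    obtain ⟨j, rfl⟩ := finSumFinEquiv.surjective j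
    rcases i with i | i <;> rcases j with j | j
    · simp [Subsingleton.elim i 0, Subsingleton.elim j 0]
    · simp [Subsingleton.elim i 0]
    · simpa [Subsingleton.elim j 0] using x.2.apply _ _
    · simp

/-- The rank one matrix `a⁻¹ • b bᵀ`, the correction term of the Schur complement. -/
noncomputable def schurTerm (p : ℝ × (Fin n → ℝ)) : SymMat n :=
  ⟨p.1⁻¹ • vecMulVec p.2 p.2, by
    change (p.1⁻¹ • vecMulVec p.2 p.2)ᵀ = _
    simp [transpose_vecMulVec]⟩

lemma schurTerm_eq (a : ℝ) (b : Fin n → ℝ) :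
    (schurTerm (a, b)).1 = (replicateRow (Fin 1) b)ᴴ * (diagonal fun _ : Fin 1 => a)⁻¹ *
      replicateRow (Fin 1) b := by
  ext i j
  simp [schurTerm, vecMulVec_apply, Matrix.mul_apply, Ring.inverse_eq_inv']
  ring

lemma det_ofBlocks {a : ℝ} (ha : a ≠ 0) (b : Fin n → ℝ) (C : SymMat n) :
    (ofBlocks n ((a, b), schurTerm (a, b) + C)).1.det = a * C.1.det := by
  have : Invertible (diagonal fun _ : Fin 1 => a) := invertibleOfIsUnitDet _ (by simpa using ha)
  change ((fromBlocks _ _ _ _).submatrix _ _).det = _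
  rw [det_submatrix_equiv_self, det_fromBlocks₁₁, invOf_eq_nonsing_inv]
  simp [schurTerm_eq]

lemma posDef_ofBlocks_iff (a : ℝ) (b : Fin n → ℝ) (C : SymMat n) :
    (ofBlocks n ((a, b), schurTerm (a, b) + C)).1.PosDef ↔ 0 < a ∧ C.1.PosDef := by
  have key : 0 < a → ((ofBlocks n ((a, b), schurTerm (a, b) + C)).1.PosDef ↔ C.1.PosDef) := by
    intro ha
    have hA : (diagonal fun _ : Fin 1 => a).PosDef := PosDef.diagonal fun _ => ha
    have : Invertible (diagonal fun _ : Fin 1 => a) := invertibleOfIsUnitDet _ (by simpa using ha.ne')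
    have hpsd : (ofBlocks n ((a, b), schurTerm (a, b) + C)).1.PosSemidef ↔ C.1.PosSemidef := by
      change ((fromBlocks _ _ _ _).submatrix _ _).PosSemidef ↔ _
      rw [posSemidef_submatrix_equiv, PosDef.fromBlocks₁₁ _ _ hA]
      simp [schurTerm_eq]
    constructor
    · intro h
      refine (hpsd.mp h.posSemidef).posDef_iff_det_ne_zero.mpr ?_
      have := h.det_pos.ne'
      rw [det_ofBlocks ha.ne'] at this
      exact right_ne_zero_of_mul this
    · intro h
      refine (hpsd.mpr h.posSemidef).posDef_iff_det_ne_zero.mpr ?_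
      rw [det_ofBlocks ha.ne']
      exact mul_ne_zero ha.ne' h.det_pos.ne'
  refine ⟨fun h => ?_, fun h => (key h.1).mpr h.2⟩
  have ha : 0 < a := by
    have := h.diag_pos (i := finSumFinEquiv (.inl 0))
    simpa [ofBlocks] using this
  exact ⟨ha, (key ha).mp h⟩

lemma trace_ofBlocks (a : ℝ) (b : Fin n → ℝ) (C : SymMat n) :
    (ofBlocks n ((a, b), schurTerm (a, b) + C)).1.trace = a + a⁻¹ * ∑ i, b i ^ 2 + C.1.trace := by
  simp only [trace, diag_apply]
  rw [← finSumFinEquiv.sum_comp]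
  simp [ofBlocks, schurTerm, Finset.sum_add_distrib, vecMulVec_apply, Finset.mul_sum, pow_two]
  ring

/-- The factor split off from `coneDensity` by a Schur complement. -/
noncomputable def borderDensity (s : ℝ) (p : ℝ × (Fin n → ℝ)) : ℝ≥0∞ :=
  (Set.Ioi 0).indicator (fun a : ℝ => ENNReal.ofReal (a ^ s * Real.exp (-a / 2))) p.1 *
    ENNReal.ofReal (∏ i, Real.exp (-(2 * p.1)⁻¹ * p.2 i ^ 2))

lemma measurable_borderDensity (s : ℝ) :
    Measurable (borderDensity s : ℝ × (Fin n → ℝ) → ℝ≥0∞) := by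
  unfold borderDensity
  refine Measurable.mul ?_ (by fun_prop)
  exact (Measurable.indicator (by fun_prop) measurableSet_Ioi).comp measurable_fst

lemma coneDensity_ofBlocks (s : ℝ) (p : ℝ × (Fin n → ℝ)) (C : SymMat n) :
    coneDensity s (ofBlocks n (p, schurTerm p + C)) = borderDensity s p * coneDensity s C := by
  obtain ⟨a, b⟩ := p
  by_cases ha : 0 < a
  · have ha' : a ∈ Set.Ioi 0 := ha
    by_cases hC : C.1.PosDef
    · have h := (posDef_ofBlocks_iff a b C).mpr ⟨ha, hC⟩
      rw [coneDensity, if_pos h, coneDensity, if_pos hC, borderDensity, Set.indicator_of_mem ha',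
        ← ENNReal.ofReal_mul (by positivity), ← ENNReal.ofReal_mul (by positivity), det_ofBlocks ha.ne',
        trace_ofBlocks, Real.mul_rpow ha.le hC.det_pos.le, ← Real.exp_sum, ← Finset.mul_sum]
      congr 1
      rw [show -(a + a⁻¹ * ∑ i, b i ^ 2 + C.1.trace) / 2 =
        -a / 2 + -(2 * a)⁻¹ * ∑ i, b i ^ 2 + -C.1.trace / 2 by rw [mul_inv]; ring, Real.exp_add,
        Real.exp_add]
      ring
    · have h := (posDef_ofBlocks_iff a b C).not.mpr fun h => hC h.2
      rw [coneDensity, if_neg h, coneDensity, if_neg hC, mul_zero]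
  · have h := (posDef_ofBlocks_iff a b C).not.mpr fun h => ha h.1
    rw [coneDensity, if_neg h, borderDensity, Set.indicator_of_notMem (by simpa using ha), zero_mul,
      zero_mul]

lemma lintegral_borderDensity_fiber (s a : ℝ) :
    ∫⁻ b : Fin n → ℝ, borderDensity s (a, b) =
      (Set.Ioi 0).indicator (fun a : ℝ => ENNReal.ofReal
        (√(2 * Real.pi) ^ n * (a ^ (s + n / 2) * Real.exp (-(1 / 2) * a ^ (1 : ℝ))))) a := by
  simp only [borderDensity]
  rw [lintegral_const_mul _ (by fun_prop)]
  by_cases ha : a ∈ Set.Ioi 0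
  · have ha' : 0 < a := ha
    simp only [Set.indicator_of_mem ha]
    have hpos : 0 < (2 * a)⁻¹ := by positivity
    rw [← ofReal_integral_eq_lintegral_ofReal, integral_fintype_prod_volume_eq_prod
      (f := fun (i : Fin n) (t : ℝ) => Real.exp (-(2 * a)⁻¹ * t ^ 2)),
      ← ENNReal.ofReal_mul (by positivity)]
    · congr 1
      simp only [integral_gaussian, Finset.prod_const, Finset.card_univ, Fintype.card_fin]
      rw [div_inv_eq_mul, show Real.pi * (2 * a) = (2 * Real.pi) * a by ring,
        Real.sqrt_mul (by positivity), mul_pow, Real.rpow_add ha', Real.sqrt_eq_rpow a,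
        ← Real.rpow_natCast (a ^ _), ← Real.rpow_mul ha'.le, Real.rpow_one]
      ring_nf
    · exact Integrable.fintype_prod fun i => integrable_exp_neg_mul_sq hpos
    · exact .of_forall fun b => by positivity
  · simp [Set.indicator_of_notMem ha]

lemma lintegral_borderDensity {s : ℝ} (hs : -1 < s) :
    ∫⁻ p : ℝ × (Fin n → ℝ), borderDensity s p ≠ 0 ∧
      ∫⁻ p : ℝ × (Fin n → ℝ), borderDensity s p ≠ ∞ := by
  rw [Measure.volume_eq_prod, lintegral_prod _ (measurable_borderDensity s).aemeasurable]
  simp only [lintegral_borderDensity_fiber]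
  rw [lintegral_indicator measurableSet_Ioi]
  constructor
  · refine (setLIntegral_pos_iff (by fun_prop)).mpr ?_ |>.ne'
    rw [Set.inter_eq_right.mpr]
    · simp
    · intro a ha
      have ha' : 0 < a := ha
      simp only [Function.mem_support, ne_eq, ENNReal.ofReal_eq_zero, not_le]
      positivity
  · have hn : (0 : ℝ) ≤ n / 2 := by positivity
    have := (integrableOn_rpow_mul_exp_neg_mul_rpow (p := 1) (s := s + n / 2) (b := 1 / 2)
      (by linarith) (by norm_num) (by norm_num)).const_mul (√(2 * Real.pi) ^ n)
    exact (Integrable.lintegral_lt_top this).ne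

lemma exists_lintegral_coneDensity_eq (s : ℝ) (μ : Measure (SymMat (1 + n))) [μ.IsAddHaarMeasure]
    (ν : Measure (SymMat n)) [ν.IsAddHaarMeasure] :
    ∃ c : ℝ≥0∞, c ≠ 0 ∧ c ≠ ∞ ∧ ∫⁻ x, coneDensity s x ∂μ =
      c * ((∫⁻ p : ℝ × (Fin n → ℝ), borderDensity s p) * ∫⁻ x, coneDensity s x ∂ν) := by
  let e := (ofBlocks n).toContinuousLinearEquiv
  let ρ := ((volume : Measure (ℝ × (Fin n → ℝ))).prod ν).map e
  have : (volume : Measure (ℝ × (Fin n → ℝ))).IsAddHaarMeasure :=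
    Measure.prod.instIsAddHaarMeasure volume volume
  have : ρ.IsAddHaarMeasure := e.isAddHaarMeasure_map _
  refine ⟨μ.addHaarScalarFactor ρ, ?_, ENNReal.coe_ne_top, ?_⟩
  · exact_mod_cast (Measure.addHaarScalarFactor_pos_of_isAddHaarMeasure μ ρ).ne'
  · conv_lhs => rw [Measure.isAddLeftInvariant_eq_smul μ ρ]
    have hm := measurable_coneDensity (n := 1 + n) s
    have he : Measurable e := e.continuous.measurable
    rw [lintegral_smul_measure, lintegral_map hm he,
      lintegral_prod (fun z => coneDensity s (e z)) (hm.comp he).aemeasurable]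
    have h (p : ℝ × (Fin n → ℝ)) : ∫⁻ C, coneDensity s (e (p, C)) ∂ν =
        borderDensity s p * ∫⁻ C, coneDensity s C ∂ν := by
      rw [← lintegral_add_left_eq_self _ (schurTerm p),
        ← lintegral_const_mul _ (measurable_coneDensity s)]
      exact lintegral_congr fun C => coneDensity_ofBlocks s p C
    simp only [h]
    rw [lintegral_mul_const _ (measurable_borderDensity s)]
    rfl

lemma lintegral_coneDensity {s : ℝ} (hs : -1 < s) (μ : Measure (SymMat n)) [μ.IsAddHaarMeasure] :
    ∫⁻ x, coneDensity s x ∂μ ≠ 0 ∧ ∫⁻ x, coneDensity s x ∂μ ≠ ∞ := by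
  induction n with
  | zero =>
    have h (x : SymMat 0) : coneDensity s x = 1 := by
      have hx : x.1.PosDef := by
        rw [Subsingleton.elim x.1 1]
        exact PosDef.one
      simp [coneDensity, hx]
    have : CompactSpace (SymMat 0) := ⟨Set.subsingleton_of_subsingleton.isCompact⟩
    simp only [h, lintegral_one]
    exact ⟨(NeZero.ne μ) ∘ Measure.measure_univ_eq_zero.mp, measure_ne_top μ _⟩
  | succ n ih =>
    have h (m : ℕ) (hm : m = 1 + n) (μ : Measure (SymMat m)) [μ.IsAddHaarMeasure] :
        ∫⁻ x, coneDensity s x ∂μ ≠ 0 ∧ ∫⁻ x, coneDensity s x ∂μ ≠ ∞ := by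
      subst hm
      let ν : Measure (SymMat n) := Measure.addHaar
      obtain ⟨c, hc, hc', h⟩ := exists_lintegral_coneDensity_eq s μ ν
      have hb := lintegral_borderDensity (n := n) hs
      rw [h]
      exact ⟨mul_ne_zero hc (mul_ne_zero hb.1 (ih ν).1),
        ENNReal.mul_ne_top hc' (ENNReal.mul_ne_top hb.2 (ih ν).2)⟩
    exact h (n + 1) (add_comm n 1) μ

end SymMat

namespace SymMat

open Matrix

variable {n : ℕ}

lemma lintegral_comp_congruence (μ : Measure (SymMat n)) [μ.IsAddHaarMeasure]
    {B : Matrix (Fin n) (Fin n) ℝ} (hB : B.det ≠ 0) {f : SymMat n → ℝ≥0∞} (hf : Measurable f) :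
    ∫⁻ x, f (congruence B x) ∂μ = ENNReal.ofReal |(B.det ^ (n + 1))⁻¹| * ∫⁻ x, f x ∂μ := by
  rw [← lintegral_map hf (congruence B).continuous_of_finiteDimensional.measurable,
    map_linearMap_addHaar μ (det_congruence_ne_zero hB), lintegral_smul_measure, det_congruence,
    smul_eq_mul]

lemma ofReal_wishartDensity (η : ℝ) {S B : Matrix (Fin n) (Fin n) ℝ} (hB : B.det ≠ 0)
    (hSB : S⁻¹ = Bᵀ * B) (x : SymMat n) :
    ENNReal.ofReal (wishartDensity n η S x) =
      ENNReal.ofReal (S⁻¹.det ^ (-(η / 2 - ((n : ℝ) + 1) / 2))) *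
        coneDensity (η / 2 - ((n : ℝ) + 1) / 2) (congruence B x) := by
  have hiff : (congruence B x).1.PosDef ↔ x.1.PosDef := by
    have := IsUnit.posDef_star_right_conjugate_iff (x := x.1) ((isUnit_iff_isUnit_det B).mpr
      (isUnit_iff_ne_zero.mpr hB))
    rwa [star_eq_conjTranspose, conjTranspose_eq_transpose_of_trivial] at this
  by_cases hx : x.1.PosDef
  · have hS : 0 < S⁻¹.det := by
      rw [hSB, det_mul, det_transpose]
      exact mul_self_pos.mpr hB
    have hdet : (congruence B x).1.det = S⁻¹.det * x.1.det := by
      simp only [coe_congruence, hSB, det_mul, det_transpose]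
      ring
    have htr : (congruence B x).1.trace = (S⁻¹ * x.1).trace := by
      rw [coe_congruence, trace_mul_comm, ← Matrix.mul_assoc, hSB]
    rw [wishartDensity, if_pos hx, coneDensity, if_pos (hiff.mpr hx), hdet, htr,
      Real.mul_rpow hS.le hx.det_pos.le, ← ENNReal.ofReal_mul (by positivity), Real.rpow_neg hS.le]
    congr 1
    have := (Real.rpow_pos_of_pos hS (η / 2 - ((n : ℝ) + 1) / 2)).ne'
    field_simp
  · rw [wishartDensity, if_neg hx, coneDensity, if_neg (hiff.not.mpr hx)]
    simp

lemma measurable_wishartDensity (η : ℝ) (S : Matrix (Fin n) (Fin n) ℝ) :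
    Measurable (wishartDensity n η S) := by
  refine Measurable.ite measurableSet_setOf_posDef ?_ measurable_const
  have h1 : Measurable fun x : SymMat n => (S⁻¹ * x.1).trace := Continuous.measurable (by fun_prop)
  have h2 : Measurable fun x : SymMat n => x.1.det := Continuous.measurable (by fun_prop)
  fun_prop

lemma wishartDensity_nonneg (η : ℝ) (S : Matrix (Fin n) (Fin n) ℝ) (x : SymMat n) :
    0 ≤ wishartDensity n η S x := by
  unfold wishartDensity
  split_ifs with hx
  · have := hx.det_pos
    positivity
  · rfl

lemma lintegral_wishartDensity (μ : Measure (SymMat n)) [μ.IsAddHaarMeasure] (η : ℝ)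
    {S : Matrix (Fin n) (Fin n) ℝ} (hS : S.PosDef) :
    ∫⁻ x, ENNReal.ofReal (wishartDensity n η S x) ∂μ =
      ENNReal.ofReal (S.det ^ (η / 2)) *
        ∫⁻ x, coneDensity (η / 2 - ((n : ℝ) + 1) / 2) x ∂μ := by
  open scoped MatrixOrder in
  obtain ⟨B, hSB⟩ := CStarAlgebra.nonneg_iff_eq_star_mul_self.mp hS.inv.posSemidef.nonneg
  rw [star_eq_conjTranspose, conjTranspose_eq_transpose_of_trivial] at hSB
  have hdet : S⁻¹.det = |B.det| ^ 2 := by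
    rw [hSB, det_mul, det_transpose, sq_abs, sq]
  have hB : B.det ≠ 0 := by
    intro h
    have := hS.inv.det_pos
    simp [hdet, h] at this
  have hB' : 0 < |B.det| := abs_pos.mpr hB
  simp only [ofReal_wishartDensity η hB hSB]
  have hm := measurable_coneDensity (n := n) (η / 2 - ((n : ℝ) + 1) / 2)
  rw [lintegral_const_mul (f := fun x => coneDensity _ (congruence B x)) _
    (hm.comp (congruence B).continuous_of_finiteDimensional.measurable),
    lintegral_comp_congruence μ hB hm, ← mul_assoc,
    ← ENNReal.ofReal_mul (Real.rpow_nonneg hS.inv.det_pos.le _)]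
  congr 2
  have hS' : S.det = |B.det| ^ (-2 : ℝ) := by
    rw [Real.rpow_neg hB'.le, Real.rpow_two, ← hdet, det_nonsing_inv, Ring.inverse_eq_inv', inv_inv]
  rw [hS', hdet, abs_inv, abs_pow, ← Real.rpow_natCast, ← Real.rpow_natCast, ← Real.rpow_neg hB'.le,
    ← Real.rpow_mul hB'.le, ← Real.rpow_mul hB'.le, ← Real.rpow_add hB']
  congr 1
  push_cast
  ring

section Integral

variable (μ : Measure (SymMat n)) [μ.IsAddHaarMeasure] {η : ℝ} {S : Matrix (Fin n) (Fin n) ℝ}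

lemma integrable_wishartDensity (hη : (n : ℝ) - 1 < η) (hS : S.PosDef) :
    Integrable (wishartDensity n η S) μ := by
  refine ⟨(measurable_wishartDensity η S).aestronglyMeasurable, ?_⟩
  rw [hasFiniteIntegral_iff_ofReal (.of_forall (wishartDensity_nonneg η S)),
    lintegral_wishartDensity μ η hS]
  exact ENNReal.mul_lt_top ENNReal.ofReal_lt_top
    (lintegral_coneDensity (by linarith) μ).2.lt_top

lemma integral_wishartDensity (hS : S.PosDef) :
    ∫ x, wishartDensity n η S x ∂μ = S.det ^ (η / 2) *
      (∫⁻ x, coneDensity (η / 2 - ((n : ℝ) + 1) / 2) x ∂μ).toReal := by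
  have := hS.det_pos
  rw [integral_eq_lintegral_of_nonneg_ae (.of_forall (wishartDensity_nonneg η S))
    (measurable_wishartDensity η S).aestronglyMeasurable, lintegral_wishartDensity μ η hS,
    ENNReal.toReal_mul, ENNReal.toReal_ofReal (by positivity)]

lemma integral_wishartDensity_pos (hη : (n : ℝ) - 1 < η) (hS : S.PosDef) :
    0 < ∫ x, wishartDensity n η S x ∂μ := by
  have h := lintegral_coneDensity (s := η / 2 - ((n : ℝ) + 1) / 2) (by linarith) μ
  rw [integral_wishartDensity μ hS]
  exact mul_pos (Real.rpow_pos_of_pos hS.det_pos _) (ENNReal.toReal_pos h.1 h.2)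

end Integral

lemma exp_mul_wishartDensity (η : ℝ) (S z : Matrix (Fin n) (Fin n) ℝ)
    (h : (S⁻¹ + (2 : ℝ) • z).PosDef) (x : SymMat n) :
    Real.exp (-(z * x.1).trace) * wishartDensity n η S x =
      wishartDensity n η (S⁻¹ + (2 : ℝ) • z)⁻¹ x := by
  unfold wishartDensity
  split_ifs with hx
  · rw [nonsing_inv_nonsing_inv _ (isUnit_iff_ne_zero.mpr h.det_pos.ne'), ← mul_assoc,
      ← Real.exp_add, Matrix.add_mul, trace_add, smul_mul, trace_smul, smul_eq_mul]
    ring_nf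
  · simp

end SymMat

/-- The Laplace transform of the central Wishart distribution on `Sym_n(ℝ)`:
for `η > n − 1`, `Σ` symmetric positive definite and symmetric `z` with `Σ⁻¹ + 2z`
positive definite, `∫ exp(−tr(zx)) w_{η,Σ}(x) dμ(x) = det(1 + 2Σz)^{−η/2} ∫ w_{η,Σ} dμ`,
and both integrals are finite and positive. -/
theorem wishart_laplace_transform {n : ℕ} (hn : 1 ≤ n)
    (μ : Measure (SymMat n)) [μ.IsAddHaarMeasure]
    (η : ℝ) (hη : (n : ℝ) - 1 < η)
    (S : Matrix (Fin n) (Fin n) ℝ) (hS : S.PosDef) (hSsymm : S.IsSymm)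
    (z : Matrix (Fin n) (Fin n) ℝ) (hz : z.IsSymm) (hpd : (S⁻¹ + (2 : ℝ) • z).PosDef) :
    Integrable (wishartDensity n η S) μ ∧
    0 < ∫ x, wishartDensity n η S x ∂μ ∧
    Integrable (fun x : SymMat n =>
      Real.exp (-(z * (x : Matrix (Fin n) (Fin n) ℝ)).trace) * wishartDensity n η S x) μ ∧
    0 < (∫ x : SymMat n,
      Real.exp (-(z * (x : Matrix (Fin n) (Fin n) ℝ)).trace) * wishartDensity n η S x ∂μ) ∧
    (∫ x : SymMat n,
        Real.exp (-(z * (x : Matrix (Fin n) (Fin n) ℝ)).trace) * wishartDensity n η S x ∂μ) =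
      ((1 + (2 : ℝ) • (S * z)).det) ^ (-(η / 2)) * ∫ x, wishartDensity n η S x ∂μ := by
  have hA := hpd.inv
  simp only [SymMat.exp_mul_wishartDensity η S z hpd]
  refine ⟨SymMat.integrable_wishartDensity μ hη hS, SymMat.integral_wishartDensity_pos μ hη hS,
    SymMat.integrable_wishartDensity μ hη hA, SymMat.integral_wishartDensity_pos μ hη hA, ?_⟩
  have hSu : IsUnit S.det := isUnit_iff_ne_zero.mpr hS.det_pos.ne'
  have hdet : (1 + (2 : ℝ) • (S * z)).det = S.det * (S⁻¹ + (2 : ℝ) • z).det := by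
    rw [← Matrix.det_mul, Matrix.mul_add, Matrix.mul_nonsing_inv _ hSu, Matrix.mul_smul]
  rw [SymMat.integral_wishartDensity μ hA, SymMat.integral_wishartDensity μ hS, hdet,
    Real.mul_rpow hS.det_pos.le hpd.det_pos.le, Matrix.det_nonsing_inv, Ring.inverse_eq_inv',
    Real.inv_rpow hpd.det_pos.le, Real.rpow_neg hS.det_pos.le, Real.rpow_neg hpd.det_pos.le]
  have := (Real.rpow_pos_of_pos hS.det_pos (η / 2)).ne'
  field_simp
end

section
/- Fix n ≥ 1, an additive Haar measure μ on the real vector space Sym_n(ℝ) of n×n real symmetric matrices, reals η₁ > n−1 and η₂ > n−1, and an n×n real symmetric positive definite matrix Σ. Then there exists a constant c > 0 such that for every s ∈ Sym_n(ℝ): ∫ w_{η₁,Σ}(x) · w_{η₂,Σ}(s − x) dμ(x) = c · w_{η₁+η₂,Σ}(s). In particular, the sum of two independent Wishart random matrices with shapes η₁, η₂ and common scale Σ is Wishart with shape η₁ + η₂ and scale Σ. -/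
open MeasureTheory
open scoped ENNReal Matrix

instance matrixSecondCountableTopology {m n : Type*} [Countable m] [Countable n] :
    SecondCountableTopology (Matrix m n ℝ) :=
  inferInstanceAs (SecondCountableTopology (m → n → ℝ))

instance symMatBorelSpace (n : ℕ) : BorelSpace (SymMat n) :=
  Subtype.borelSpace _

instance symMatSecondCountableTopology (n : ℕ) : SecondCountableTopology (SymMat n) :=
  TopologicalSpace.Subtype.secondCountableTopology _

instance symMatLocallyCompactSpace (n : ℕ) : LocallyCompactSpace (SymMat n) :=
  let e : SymMat n ≃ₗ[ℝ] (Fin (Module.finrank ℝ (SymMat n)) → ℝ) :=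
    LinearEquiv.ofFinrankEq _ _ (by simp)
  e.toContinuousLinearEquiv.toHomeomorph.isClosedEmbedding.locallyCompactSpace

/-- A linear automorphism of a finite-dimensional Hausdorff topological vector space rescales Haar
measure by the inverse of the absolute value of its determinant. -/
theorem map_linearMap_addHaar_of_finiteDimensional {E : Type*} [AddCommGroup E] [Module ℝ E]
    [TopologicalSpace E] [IsTopologicalAddGroup E] [ContinuousSMul ℝ E] [T2Space E]
    [FiniteDimensional ℝ E] [MeasurableSpace E] [BorelSpace E] (μ : Measure E)
    [μ.IsAddHaarMeasure] {f : E →ₗ[ℝ] E} (hf : LinearMap.det f ≠ 0) :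
    μ.map f = ENNReal.ofReal |(LinearMap.det f)⁻¹| • μ := by
  let e : E ≃L[ℝ] (Fin (Module.finrank ℝ E) → ℝ) :=
    (LinearEquiv.ofFinrankEq _ _ (by simp)).toContinuousLinearEquiv
  let g : (Fin (Module.finrank ℝ E) → ℝ) →ₗ[ℝ] (Fin (Module.finrank ℝ E) → ℝ) :=
    e.toLinearEquiv.toLinearMap ∘ₗ f ∘ₗ e.toLinearEquiv.symm.toLinearMap
  have hg : LinearMap.det g = LinearMap.det f := LinearMap.det_conj f e.toLinearEquiv
  have hgc : Measurable g := g.continuous_of_finiteDimensional.measurable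
  have he : Measurable e := e.continuous.measurable
  have hes : Measurable e.symm := e.symm.continuous.measurable
  have hfg : (f : E → E) = e.symm ∘ g ∘ e := by
    ext x
    simp [g]
  have : (μ.map e).IsAddHaarMeasure := e.isAddHaarMeasure_map μ
  have hid : e.symm ∘ e = id := by
    ext x
    simp
  rw [hfg, ← Measure.map_map hes (hgc.comp he), ← Measure.map_map hgc he,
    Measure.map_linearMap_addHaar_eq_smul_addHaar _ (hg ▸ hf), Measure.map_smul,
    Measure.map_map hes he, hid, Measure.map_id, hg]

/-- Congruence `x ↦ M x Mᵀ` as a linear endomorphism of the symmetric matrices. -/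
def symConj {n : ℕ} (M : Matrix (Fin n) (Fin n) ℝ) : SymMat n →ₗ[ℝ] SymMat n where
  toFun x := ⟨M * x.1 * Mᵀ, by
    have hx : x.1ᵀ = x.1 := x.2
    change (M * x.1 * Mᵀ)ᵀ = M * x.1 * Mᵀ
    simp [Matrix.transpose_mul, hx, Matrix.mul_assoc]⟩
  map_add' x y := by
    ext1
    simp [Matrix.mul_add, Matrix.add_mul]
  map_smul' c x := by
    ext1
    simp

@[simp]
theorem coe_symConj {n : ℕ} (M : Matrix (Fin n) (Fin n) ℝ) (x : SymMat n) :
    (symConj M x : Matrix (Fin n) (Fin n) ℝ) = M * x.1 * Mᵀ :=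
  rfl

theorem symConj_mul {n : ℕ} (M N : Matrix (Fin n) (Fin n) ℝ) :
    symConj (M * N) = symConj M ∘ₗ symConj N := by
  ext1 x
  ext1
  simp [Matrix.transpose_mul, Matrix.mul_assoc]

theorem symConj_one {n : ℕ} : symConj (1 : Matrix (Fin n) (Fin n) ℝ) = LinearMap.id := by
  ext1 x
  ext1
  simp

/-- The symmetric matrix with first row `(t, v)` and lower right block `A`. -/
def borderedEquiv (n : ℕ) : (SymMat n × (Fin n → ℝ) × ℝ) ≃ₗ[ℝ] SymMat (n + 1) where
  toFun p := ⟨Matrix.of (Fin.cons (Fin.cons p.2.2 p.2.1) fun i => Fin.cons (p.2.1 i) (p.1.1 i)), by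
    refine Matrix.IsSymm.ext fun i j => ?_
    have hA : ∀ i j, p.1.1 i j = p.1.1 j i := fun i j => Matrix.IsSymm.apply p.1.2 j i
    refine Fin.cases ?_ (fun i => ?_) i <;> refine Fin.cases ?_ (fun j => ?_) j <;> simp [hA]⟩
  invFun x := (⟨x.1.submatrix Fin.succ Fin.succ, Matrix.IsSymm.submatrix x.2 _⟩,
    fun i => x.1 0 i.succ, x.1 0 0)
  map_add' p q := by
    ext i j
    refine Fin.cases ?_ (fun i => ?_) i <;> refine Fin.cases ?_ (fun j => ?_) j <;> simp
  map_smul' c p := by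
    ext i j
    refine Fin.cases ?_ (fun i => ?_) i <;> refine Fin.cases ?_ (fun j => ?_) j <;> simp
  left_inv p := by
    ext <;> simp
  right_inv x := by
    have hx : ∀ i j, x.1 i j = x.1 j i := fun i j => Matrix.IsSymm.apply x.2 j i
    ext i j
    refine Fin.cases ?_ (fun i => ?_) i <;> refine Fin.cases ?_ (fun j => ?_) j <;> simp [hx]

section borderedEquiv

variable {n : ℕ} (A : SymMat n) (v : Fin n → ℝ) (t : ℝ) (i j : Fin n)

@[simp]
theorem borderedEquiv_zero_zero : (borderedEquiv n (A, v, t)).1 0 0 = t :=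
  rfl

@[simp]
theorem borderedEquiv_zero_succ : (borderedEquiv n (A, v, t)).1 0 i.succ = v i :=
  rfl

@[simp]
theorem borderedEquiv_succ_zero : (borderedEquiv n (A, v, t)).1 i.succ 0 = v i :=
  rfl

@[simp]
theorem borderedEquiv_succ_succ : (borderedEquiv n (A, v, t)).1 i.succ j.succ = A.1 i j :=
  rfl

end borderedEquiv

theorem det_symConj_diagonal {n : ℕ} (d : Fin n → ℝ) :
    LinearMap.det (symConj (Matrix.diagonal d)) = (∏ i, d i) ^ (n + 1) := by
  induction n with
  | zero =>
    have : Subsingleton (SymMat 0) := ⟨fun x y => by ext i; exact i.elim0⟩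
    simp [LinearMap.det_eq_one_of_subsingleton]
  | succ n ih =>
    let d' : Fin n → ℝ := fun i => d i.succ
    let g : (Fin n → ℝ) →ₗ[ℝ] (Fin n → ℝ) :=
      LinearMap.pi fun i => ((d 0 * d' i) • (LinearMap.id : ℝ →ₗ[ℝ] ℝ)) ∘ₗ LinearMap.proj i
    let h : ℝ →ₗ[ℝ] ℝ := (d 0 * d 0) • LinearMap.id
    have key : symConj (Matrix.diagonal d) = (borderedEquiv n).toLinearMap ∘ₗ
        (LinearMap.prodMap (symConj (Matrix.diagonal d')) (LinearMap.prodMap g h)) ∘ₗ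
          (borderedEquiv n).symm.toLinearMap := by
      refine LinearMap.ext fun x => ?_
      obtain ⟨⟨A, v, t⟩, rfl⟩ := (borderedEquiv n).surjective x
      ext i j
      refine Fin.cases ?_ (fun i => ?_) i <;> refine Fin.cases ?_ (fun j => ?_) j <;>
        simp [g, h, d', Matrix.diagonal_mul, Matrix.mul_diagonal] <;> ring
    have hg : LinearMap.det g = d 0 ^ n * ∏ i, d' i := by
      simp [g, LinearMap.det_pi, Finset.prod_mul_distrib]
    have hh : LinearMap.det h = d 0 * d 0 := by simp [h]
    rw [key, LinearMap.det_conj, LinearMap.det_prodMap, LinearMap.det_prodMap, ih, hg, hh,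
      Fin.prod_univ_succ]
    ring

theorem det_symConj_transvection {n : ℕ} {i j : Fin n} (hij : i ≠ j) (c : ℝ) :
    LinearMap.det (symConj (Matrix.transvection i j c)) = 1 := by
  have hadd : ∀ a b : ℝ, LinearMap.det (symConj (Matrix.transvection i j (a + b))) =
      LinearMap.det (symConj (Matrix.transvection i j a)) *
        LinearMap.det (symConj (Matrix.transvection i j b)) := fun a b => by
    rw [← Matrix.transvection_mul_transvection_same _ _ hij, symConj_mul, LinearMap.det_comp]
  have hne : LinearMap.det (symConj (Matrix.transvection i j c)) ≠ 0 := by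
    intro h0
    have := hadd c (-c)
    simp [h0, symConj_one] at this
  let d : Fin n → ℝ := Function.update 1 i 2
  have hd : LinearMap.det (symConj (Matrix.diagonal d)) ≠ 0 := by
    rw [det_symConj_diagonal]
    refine pow_ne_zero _ (Finset.prod_ne_zero_iff.2 fun k _ => ?_)
    by_cases hk : k = i <;> simp [d, hk]
  have hcomm : Matrix.diagonal d * Matrix.transvection i j c =
      Matrix.transvection i j (c + c) * Matrix.diagonal d := by
    ext k l
    by_cases hk : k = i <;> by_cases hl : l = j <;>
    simp [Matrix.transvection, Matrix.diagonal_mul, Matrix.mul_diagonal, d, Matrix.one_apply,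
      Matrix.single_apply, Function.update_apply, hk, hl] <;> grind
  have h := congrArg (fun M => LinearMap.det (symConj M)) hcomm
  simp only [symConj_mul, LinearMap.det_comp, hadd] at h
  refine mul_left_cancel₀ (mul_ne_zero hd hne) ?_
  linear_combination -h

theorem det_symConj {n : ℕ} (M : Matrix (Fin n) (Fin n) ℝ) :
    LinearMap.det (symConj M) = M.det ^ (n + 1) := by
  refine Matrix.diagonal_transvection_induction
    (fun M => LinearMap.det (symConj M) = M.det ^ (n + 1)) M (fun D _ => ?_) (fun t => ?_)
    (fun A B hA hB => ?_)
  · rw [det_symConj_diagonal, Matrix.det_diagonal]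
  · rw [t.det, one_pow]
    exact det_symConj_transvection t.hij t.c
  · rw [symConj_mul, LinearMap.det_comp, hA, hB, Matrix.det_mul, mul_pow]

theorem isOpen_setOf_posDef (n : ℕ) : IsOpen {x : SymMat n | x.1.PosDef} := by
  rw [isOpen_iff_mem_nhds]
  intro x hx
  have hK : IsCompact (Metric.sphere (0 : Fin n → ℝ) 1) := isCompact_sphere _ _
  have hev : ∀ᶠ y : SymMat n in nhds x, ∀ v ∈ Metric.sphere (0 : Fin n → ℝ) 1,
      0 < v ⬝ᵥ y.1 *ᵥ v := by
    refine hK.eventually_forall_of_forall_eventually fun v hv => ?_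
    have hv0 : v ≠ 0 := by
      rintro rfl
      simp at hv
    have hpos : 0 < v ⬝ᵥ x.1 *ᵥ v := by
      simpa using hx.dotProduct_mulVec_pos hv0
    have hcont : Continuous fun z : SymMat n × (Fin n → ℝ) => z.2 ⬝ᵥ z.1.1 *ᵥ z.2 := by
      fun_prop
    exact hcont.continuousAt.eventually (lt_mem_nhds hpos)
  filter_upwards [hev] with y hy
  refine Matrix.posDef_iff_dotProduct_mulVec.2 ⟨?_, fun v hv => ?_⟩
  · have hy' : y.1ᵀ = y.1 := y.2
    simpa [Matrix.IsHermitian, Matrix.conjTranspose_eq_transpose_of_trivial] using hy'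
  · have hnv : 0 < ‖v‖ := norm_pos_iff.2 hv
    have h := hy (‖v‖⁻¹ • v) (by simp [norm_smul, hnv.ne'])
    rw [Matrix.mulVec_smul, smul_dotProduct, dotProduct_smul, smul_eq_mul, smul_eq_mul] at h
    have hi : 0 < ‖v‖⁻¹ := inv_pos.2 hnv
    simpa using (mul_pos_iff_of_pos_left hi).1 ((mul_pos_iff_of_pos_left hi).1 h)

open Classical in
/-- The function `det(x)^a` on the positive definite cone, extended by zero. -/
noncomputable def posDefDetRpow (n : ℕ) (a : ℝ) (x : SymMat n) : ℝ≥0∞ :=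
  if x.1.PosDef then ENNReal.ofReal (x.1.det ^ a) else 0

theorem measurable_posDefDetRpow (n : ℕ) (a : ℝ) : Measurable (posDefDetRpow n a) := by
  have hdet : Continuous fun x : SymMat n => x.1.det := by fun_prop
  refine Measurable.ite (isOpen_setOf_posDef n).measurableSet ?_ measurable_const
  exact (hdet.measurable.pow_const a).ennreal_ofReal

/-- Symmetric matrices with all entries in `[-1, 1]`. -/
def symBox (n : ℕ) : Set (SymMat n) := {x | ∀ i j, |x.1 i j| ≤ 1}

theorem measurableSet_symBox (n : ℕ) : MeasurableSet (symBox n) := by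
  have : symBox n = ⋂ i, ⋂ j, {x : SymMat n | |x.1 i j| ≤ 1} := by
    ext
    simp [symBox]
  rw [this]
  refine (isClosed_iInter fun i => isClosed_iInter fun j => ?_).measurableSet
  exact isClosed_le (continuous_subtype_val.matrix_elem i j).abs continuous_const

theorem lintegral_Ioc_rpow_lt_top {a : ℝ} (ha : -1 < a) :
    ∫⁻ u : ℝ, (Set.Ioc (0 : ℝ) 1).indicator (fun u => ENNReal.ofReal (u ^ a)) u < ∞ := by
  rw [lintegral_indicator measurableSet_Ioc]
  have h := (intervalIntegral.intervalIntegrable_rpow' (a := 0) (b := 1) ha).1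
  exact h.lintegral_lt_top

theorem det_borderedEquiv {n : ℕ} (A : SymMat n) (v : Fin n → ℝ) (t : ℝ) (hA : A.1.PosDef) :
    (borderedEquiv n (A, v, t)).1.det = A.1.det * (t - v ⬝ᵥ A.1⁻¹ *ᵥ v) := by
  let e : Unit ⊕ Fin n ≃ Fin (n + 1) :=
    { toFun := Sum.elim (fun _ => 0) Fin.succ
      invFun := Fin.cases (Sum.inl ()) Sum.inr
      left_inv := by rintro (_ | _) <;> simp
      right_inv := fun i => by refine Fin.cases ?_ (fun i => ?_) i <;> simp }
  have : Invertible A.1 := hA.isUnit.invertible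
  have hblock : (borderedEquiv n (A, v, t)).1.submatrix e e =
      Matrix.fromBlocks (Matrix.of fun _ _ => t) (Matrix.replicateRow Unit v)
        (Matrix.replicateCol Unit v) A.1 := by
    ext (i | i) (j | j) <;> simp [e]
  rw [← Matrix.det_submatrix_equiv_self e, hblock, Matrix.det_fromBlocks₂₂,
    Matrix.invOf_eq_nonsing_inv]
  congr 1
  rw [Matrix.det_unique, Matrix.mul_assoc]
  simp [Matrix.mul_apply, Matrix.mulVec, dotProduct]

theorem posDef_of_posDef_borderedEquiv {n : ℕ} {A : SymMat n} {v : Fin n → ℝ} {t : ℝ}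
    (h : (borderedEquiv n (A, v, t)).1.PosDef) : A.1.PosDef :=
  h.submatrix (Fin.succ_injective n)

theorem indicator_posDefDetRpow_borderedEquiv_le {n : ℕ} (a : ℝ) (A : SymMat n)
    (v : Fin n → ℝ) (t : ℝ) :
    (symBox (n + 1)).indicator (posDefDetRpow (n + 1) a) (borderedEquiv n (A, v, t)) ≤
      (symBox n).indicator (posDefDetRpow n a) A *
        ((Set.Icc (-1 : Fin n → ℝ) 1).indicator 1 v *
          (Set.Ioc (0 : ℝ) 1).indicator (fun u => ENNReal.ofReal (u ^ a))
            (t - v ⬝ᵥ A.1⁻¹ *ᵥ v)) := by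
  by_cases hx : (borderedEquiv n (A, v, t)) ∈ symBox (n + 1)
  swap
  · simp [hx]
  by_cases hpd : (borderedEquiv n (A, v, t)).1.PosDef
  swap
  · rw [Set.indicator_of_mem hx, posDefDetRpow, if_neg hpd]
    exact zero_le
  have hA := posDef_of_posDef_borderedEquiv hpd
  have hdet := det_borderedEquiv A v t hA
  have hdA := hA.det_pos
  have hd := hpd.det_pos
  rw [hdet] at hd
  have hpos : 0 < t - v ⬝ᵥ A.1⁻¹ *ᵥ v := (mul_pos_iff_of_pos_left hdA).1 hd
  have hq : 0 ≤ v ⬝ᵥ A.1⁻¹ *ᵥ v := by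
    simpa using hA.inv.posSemidef.dotProduct_mulVec_nonneg v
  have ht : t ≤ 1 := (abs_le.1 (hx 0 0)).2
  have hv : v ∈ Set.Icc (-1 : Fin n → ℝ) 1 :=
    ⟨fun i => (abs_le.1 (hx 0 i.succ)).1, fun i => (abs_le.1 (hx 0 i.succ)).2⟩
  have hAb : A ∈ symBox n := fun i j => hx i.succ j.succ
  have hmem : t - v ⬝ᵥ A.1⁻¹ *ᵥ v ∈ Set.Ioc (0 : ℝ) 1 := ⟨hpos, by linarith⟩
  rw [Set.indicator_of_mem hx, Set.indicator_of_mem hAb, Set.indicator_of_mem hv,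
    Set.indicator_of_mem hmem, posDefDetRpow, posDefDetRpow, if_pos hpd, if_pos hA, hdet,
    Real.mul_rpow hdA.le hpos.le, ENNReal.ofReal_mul (Real.rpow_nonneg hdA.le _)]
  simp

theorem lintegral_symBox_posDefDetRpow_lt_top {a : ℝ} (ha : -1 < a) :
    ∀ (n : ℕ) (μ : Measure (SymMat n)) [μ.IsAddHaarMeasure],
      ∫⁻ x, (symBox n).indicator (posDefDetRpow n a) x ∂μ < ∞ := by
  intro n
  induction n with
  | zero =>
    intro μ _
    have : Subsingleton (SymMat 0) := ⟨fun x y => by ext i; exact i.elim0⟩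
    have : IsFiniteMeasure μ := ⟨Set.subsingleton_univ.finite.isCompact.measure_lt_top⟩
    calc ∫⁻ x, (symBox 0).indicator (posDefDetRpow 0 a) x ∂μ ≤ ∫⁻ _, 1 ∂μ := by
          refine lintegral_mono fun x => (Set.indicator_le_self _ _ x).trans ?_
          unfold posDefDetRpow
          split_ifs <;> simp
      _ < ∞ := by simp
  | succ n ih =>
    intro μ _
    let ν : Measure (SymMat n) := Measure.addHaar
    let ρ : Measure (SymMat n × (Fin n → ℝ) × ℝ) := ν.prod (volume.prod volume)
    have : ρ.IsAddHaarMeasure := Measure.prod.instIsAddHaarMeasure _ _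
    let e := (borderedEquiv n).toContinuousLinearEquiv
    have : (ρ.map e).IsAddHaarMeasure := e.isAddHaarMeasure_map ρ
    have hG : Measurable ((symBox (n + 1)).indicator (posDefDetRpow (n + 1) a)) :=
      (measurable_posDefDetRpow _ a).indicator (measurableSet_symBox _)
    rw [Measure.isAddLeftInvariant_eq_smul μ (ρ.map e), lintegral_smul_measure,
      lintegral_map hG e.continuous.measurable]
    refine ENNReal.mul_lt_top ENNReal.coe_lt_top ?_
    set f := (Set.Ioc (0 : ℝ) 1).indicator (fun u => ENNReal.ofReal (u ^ a)) with hf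
    set b : (Fin n → ℝ) → ℝ≥0∞ := (Set.Icc (-1 : Fin n → ℝ) 1).indicator 1 with hb
    set g := (symBox n).indicator (posDefDetRpow n a) with hg
    have hfm : Measurable f := by
      refine Measurable.indicator ?_ measurableSet_Ioc
      fun_prop
    have hbm : Measurable b := measurable_one.indicator measurableSet_Icc
    have hgm : Measurable g := (measurable_posDefDetRpow _ a).indicator (measurableSet_symBox _)
    calc ∫⁻ p, (symBox (n + 1)).indicator (posDefDetRpow (n + 1) a) (e p) ∂ρ
        ≤ ∫⁻ A, ∫⁻ w, (symBox (n + 1)).indicator (posDefDetRpow (n + 1) a) (e (A, w))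
            ∂(volume.prod volume) ∂ν := lintegral_prod_le _
      _ ≤ ∫⁻ A, (∫⁻ v, ∫⁻ t, (symBox (n + 1)).indicator (posDefDetRpow (n + 1) a) (e (A, v, t)))
            ∂ν :=
          lintegral_mono fun A => lintegral_prod_le _
      _ ≤ ∫⁻ A, (∫⁻ v, ∫⁻ t, g A * (b v * f (t - v ⬝ᵥ A.1⁻¹ *ᵥ v))) ∂ν :=
          lintegral_mono fun A => lintegral_mono fun v => lintegral_mono fun t =>
            indicator_posDefDetRpow_borderedEquiv_le a A v t
      _ = ∫⁻ A, (∫⁻ v, g A * (b v * ∫⁻ t, f t)) ∂ν := by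
          refine lintegral_congr fun A => lintegral_congr fun v => ?_
          rw [lintegral_const_mul _ (by fun_prop), lintegral_const_mul _ (by fun_prop),
            lintegral_sub_right_eq_self f]
      _ = (∫⁻ A, g A ∂ν) * ((∫⁻ v, b v) * ∫⁻ t, f t) := by
          rw [← lintegral_mul_const _ hgm]
          refine lintegral_congr fun A => ?_
          rw [lintegral_const_mul _ (by fun_prop), lintegral_mul_const _ hbm]
      _ < ∞ := by
          refine ENNReal.mul_lt_top (ih ν) (ENNReal.mul_lt_top ?_ (lintegral_Ioc_rpow_lt_top ha))
          rw [hb, lintegral_indicator_one measurableSet_Icc]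
          exact isCompact_Icc.measure_lt_top

/-- Each off-diagonal entry of a positive definite matrix is bounded by the diagonal. -/
theorem Matrix.PosDef.two_mul_abs_apply_le {n : ℕ} {x : Matrix (Fin n) (Fin n) ℝ} (hx : x.PosDef)
    (i j : Fin n) : 2 * |x i j| ≤ x i i + x j j := by
  have hsymm : x j i = x i j := by simpa using hx.isHermitian.apply i j
  have key : ∀ c : ℝ, 0 ≤ x i i + c * x i j + (c * x i j + c * c * x j j) := fun c => by
    have h := hx.posSemidef.dotProduct_mulVec_nonneg (Pi.single i 1 + Pi.single j c)
    simp only [star_trivial, Matrix.mulVec_add, add_dotProduct, dotProduct_add,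
      Matrix.mulVec_single, single_dotProduct, Pi.smul_apply, op_smul_eq_smul,
      Matrix.col_apply, smul_eq_mul, hsymm] at h
    linarith
  have h1 := key 1
  have h2 := key (-1)
  rcases abs_cases (x i j) with ⟨h, -⟩ | ⟨h, -⟩ <;> rw [h] <;> linarith

theorem mem_symBox_of_posDef_of_posDef_one_sub {n : ℕ} {x : SymMat n} (hx : x.1.PosDef)
    (hx' : (1 - x.1).PosDef) : x ∈ symBox n := by
  intro i j
  have h := hx.two_mul_abs_apply_le i j
  have hi : 0 < 1 - x.1 i i := by simpa using hx'.diag_pos (i := i)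
  have hj : 0 < 1 - x.1 j j := by simpa using hx'.diag_pos (i := j)
  linarith

/-- The identity as a symmetric matrix. -/
def symOne (n : ℕ) : SymMat n := ⟨1, Matrix.transpose_one⟩

theorem isOpen_setOf_posDef_sub {n : ℕ} (s : SymMat n) :
    IsOpen {x : SymMat n | x.1.PosDef ∧ (s - x).1.PosDef} :=
  (isOpen_setOf_posDef n).inter
    ((isOpen_setOf_posDef n).preimage (continuous_const.sub continuous_id))

theorem nonempty_setOf_posDef_one_sub (n : ℕ) :
    {x : SymMat n | x.1.PosDef ∧ (symOne n - x).1.PosDef}.Nonempty := by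
  have h : ((1 / 2 : ℝ) • (1 : Matrix (Fin n) (Fin n) ℝ)).PosDef :=
    Matrix.PosDef.one.smul (by norm_num)
  refine ⟨(1 / 2 : ℝ) • symOne n, h, ?_⟩
  have : symOne n - (1 / 2 : ℝ) • symOne n = (1 / 2 : ℝ) • symOne n := by
    rw [sub_eq_iff_eq_add, ← add_smul]
    norm_num
  rw [this]
  exact h

/-- The convolution at `s` of two powers of the determinant on the positive definite cone. -/
noncomputable def detRpowConv {n : ℕ} (μ : Measure (SymMat n)) (a b : ℝ) (s : SymMat n) : ℝ≥0∞ :=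
  ∫⁻ x, posDefDetRpow n a x * posDefDetRpow n b (s - x) ∂μ

theorem measurable_posDefDetRpow_mul {n : ℕ} (a b : ℝ) (s : SymMat n) :
    Measurable fun x => posDefDetRpow n a x * posDefDetRpow n b (s - x) :=
  (measurable_posDefDetRpow n a).mul
    ((measurable_posDefDetRpow n b).comp (measurable_const.sub measurable_id))

theorem posDefDetRpow_symConj {n : ℕ} (a : ℝ) {q : Matrix (Fin n) (Fin n) ℝ} (hq : IsUnit q)
    (x : SymMat n) :
    posDefDetRpow n a (symConj q x) = ENNReal.ofReal ((q.det ^ 2) ^ a) * posDefDetRpow n a x := by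
  have hiff : (symConj q x).1.PosDef ↔ x.1.PosDef := by
    have := Matrix.IsUnit.posDef_star_right_conjugate_iff hq (x := x.1)
    rwa [Matrix.star_eq_conjTranspose, Matrix.conjTranspose_eq_transpose_of_trivial] at this
  unfold posDefDetRpow
  by_cases hx : x.1.PosDef
  · rw [if_pos hx, if_pos (hiff.2 hx), ← ENNReal.ofReal_mul (by positivity),
      ← Real.mul_rpow (by positivity) hx.det_pos.le]
    congr 2
    simp [Matrix.det_mul]
    ring
  · rw [if_neg hx, if_neg (mt hiff.1 hx), mul_zero]

open scoped MatrixOrder Matrix.Norms.L2Operator in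
theorem Matrix.PosDef.exists_isUnit_mul_transpose {n : ℕ} {s : Matrix (Fin n) (Fin n) ℝ}
    (hs : s.PosDef) : ∃ q : Matrix (Fin n) (Fin n) ℝ, IsUnit q ∧ s = q * qᵀ := by
  obtain ⟨y, hy, hsy⟩ := CStarAlgebra.isStrictlyPositive_iff_eq_star_mul_self.1
    hs.isStrictlyPositive
  refine ⟨star y, hy.star, ?_⟩
  rw [hsy, Matrix.star_eq_conjTranspose, Matrix.conjTranspose_eq_transpose_of_trivial,
    Matrix.transpose_transpose]

/-- Homogeneity of the convolution of determinant powers under congruence. -/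
theorem detRpowConv_of_posDef {n : ℕ} (μ : Measure (SymMat n)) [μ.IsAddHaarMeasure] (a b : ℝ)
    {s : SymMat n} (hs : s.1.PosDef) :
    detRpowConv μ a b s =
      ENNReal.ofReal (s.1.det ^ (a + b + ((n : ℝ) + 1) / 2)) * detRpowConv μ a b (symOne n) := by
  obtain ⟨q, hq, hsq⟩ := hs.exists_isUnit_mul_transpose
  have hqdet : q.det ≠ 0 := ((Matrix.isUnit_iff_isUnit_det q).1 hq).ne_zero
  have hsdet : s.1.det = q.det ^ 2 := by
    rw [hsq, Matrix.det_mul, Matrix.det_transpose, sq]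
  have hone : symConj q (symOne n) = s := by
    ext1
    simp [symOne, ← hsq]
  have hJ : LinearMap.det (symConj q) ≠ 0 := by
    rw [det_symConj]
    exact pow_ne_zero _ hqdet
  have hcont : Continuous (symConj q) := LinearMap.continuous_of_finiteDimensional _
  have hmap := map_linearMap_addHaar_of_finiteDimensional μ hJ
  have h : ∫⁻ x, posDefDetRpow n a x * posDefDetRpow n b (s - x) ∂(μ.map (symConj q)) =
      ENNReal.ofReal ((q.det ^ 2) ^ (a + b)) * detRpowConv μ a b (symOne n) := by
    rw [lintegral_map (measurable_posDefDetRpow_mul a b s) hcont.measurable, detRpowConv,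
      ← lintegral_const_mul _ (measurable_posDefDetRpow_mul a b _)]
    refine lintegral_congr fun x => ?_
    have hsub : s - symConj q x = symConj q (symOne n - x) := by rw [map_sub, hone]
    rw [hsub, posDefDetRpow_symConj a hq, posDefDetRpow_symConj b hq,
      Real.rpow_add (by positivity), ENNReal.ofReal_mul (by positivity)]
    ring
  rw [hmap, lintegral_smul_measure, smul_eq_mul] at h
  have hJabs : |LinearMap.det (symConj q)| = (q.det ^ 2) ^ (((n : ℝ) + 1) / 2) := by
    rw [det_symConj, abs_pow, ← sq_abs q.det, ← Real.rpow_natCast, ← Real.rpow_natCast,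
      ← Real.rpow_mul (abs_nonneg _)]
    congr 1
    push_cast
    ring
  calc detRpowConv μ a b s = ENNReal.ofReal |LinearMap.det (symConj q)| *
        (ENNReal.ofReal |(LinearMap.det (symConj q))⁻¹| * detRpowConv μ a b s) := by
        rw [← mul_assoc, ← ENNReal.ofReal_mul (abs_nonneg _), ← abs_mul, mul_inv_cancel₀ hJ]
        simp
    _ = _ := by
        rw [detRpowConv, h, ← mul_assoc, hJabs, ← ENNReal.ofReal_mul (by positivity), hsdet,
          add_comm (a + b), ← Real.rpow_add (by positivity)]

theorem detRpowConv_of_not_posDef {n : ℕ} (μ : Measure (SymMat n)) (a b : ℝ) {s : SymMat n}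
    (hs : ¬s.1.PosDef) : detRpowConv μ a b s = 0 := by
  rw [detRpowConv]
  refine (lintegral_congr fun x => ?_).trans lintegral_zero
  unfold posDefDetRpow
  split_ifs with hx hx'
  · refine absurd ?_ hs
    simpa using hx.add hx'
  all_goals simp

theorem detRpowConv_one_ne_zero {n : ℕ} (μ : Measure (SymMat n)) [μ.IsAddHaarMeasure] (a b : ℝ) :
    detRpowConv μ a b (symOne n) ≠ 0 := by
  intro h
  rw [detRpowConv, lintegral_eq_zero_iff (measurable_posDefDetRpow_mul a b _)] at h
  refine (isOpen_setOf_posDef_sub (symOne n)).measure_ne_zero μ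
    (nonempty_setOf_posDef_one_sub n) (measure_mono_null (fun x hx => ?_) h)
  obtain ⟨h1, h2⟩ := hx
  simp only [Set.mem_compl_iff, Set.mem_ofPred_eq, Pi.zero_apply, posDefDetRpow, if_pos h1, if_pos h2]
  exact mul_ne_zero (ENNReal.ofReal_pos.2 (Real.rpow_pos_of_pos h1.det_pos _)).ne'
    (ENNReal.ofReal_pos.2 (Real.rpow_pos_of_pos h2.det_pos _)).ne'

theorem detRpowConv_one_ne_top {n : ℕ} (μ : Measure (SymMat n)) [μ.IsAddHaarMeasure] {a b : ℝ}
    (ha : -1 < a) (hb : -1 < b) : detRpowConv μ a b (symOne n) ≠ ∞ := by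
  set f := (symBox n).indicator (posDefDetRpow n a) with hf
  set g := (symBox n).indicator (posDefDetRpow n b) with hg
  have hfm : Measurable f := (measurable_posDefDetRpow _ a).indicator (measurableSet_symBox _)
  have hgm : Measurable g := (measurable_posDefDetRpow _ b).indicator (measurableSet_symBox _)
  have hsub : Measurable fun p : SymMat n × SymMat n => p.1 - p.2 :=
    measurable_fst.sub measurable_snd
  have hm : Measurable fun p : SymMat n × SymMat n => f p.2 * g (p.1 - p.2) :=
    (hfm.comp measurable_snd).mul (hgm.comp hsub)
  have htot : ∫⁻ s, ∫⁻ x, f x * g (s - x) ∂μ ∂μ ≠ ∞ := by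
    rw [lintegral_lintegral_swap hm.aemeasurable]
    have : ∀ x, ∫⁻ s, f x * g (s - x) ∂μ = f x * ∫⁻ s, g s ∂μ := fun x => by
      rw [lintegral_const_mul _ (by fun_prop),
        lintegral_sub_right_eq_self g]
    simp_rw [this]
    rw [lintegral_mul_const _ hfm]
    exact (ENNReal.mul_lt_top (lintegral_symBox_posDefDetRpow_lt_top ha n μ)
      (lintegral_symBox_posDefDetRpow_lt_top hb n μ)).ne
  have hae := ae_lt_top hm.lintegral_prod_right' htot
  obtain ⟨s, ⟨hs, hs'⟩, hfin⟩ : ∃ s : SymMat n,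
      s ∈ {x : SymMat n | x.1.PosDef ∧ (symOne n - x).1.PosDef} ∧
        ∫⁻ x, f x * g (s - x) ∂μ < ∞ := by
    by_contra! hcon
    refine (isOpen_setOf_posDef_sub (symOne n)).measure_ne_zero μ
      (nonempty_setOf_posDef_one_sub n) (measure_mono_null (fun x hx => ?_) hae)
    exact not_lt.2 (hcon x hx)
  have hle : detRpowConv μ a b s ≤ ∫⁻ x, f x * g (s - x) ∂μ := by
    refine lintegral_mono fun x => ?_
    by_cases hx : x.1.PosDef
    swap
    · simp [posDefDetRpow, hx]
    by_cases hx' : (s - x).1.PosDef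
    swap
    · rw [posDefDetRpow, posDefDetRpow, if_neg hx', mul_zero]
      exact zero_le
    have h1 : x ∈ symBox n := by
      refine mem_symBox_of_posDef_of_posDef_one_sub hx ?_
      have := hs'.add hx'
      simpa [symOne] using this
    have h2 : s - x ∈ symBox n := by
      refine mem_symBox_of_posDef_of_posDef_one_sub hx' ?_
      have := hs'.add hx
      convert this using 1
      simp [symOne]
      abel
    rw [hf, hg, Set.indicator_of_mem h1, Set.indicator_of_mem h2]
  intro htop
  rw [detRpowConv_of_posDef μ a b hs, htop, ENNReal.mul_top
    (ENNReal.ofReal_pos.2 (Real.rpow_pos_of_pos hs.det_pos _)).ne'] at hle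
  exact (hle.trans_lt hfin).ne rfl

theorem wishartDensity_mul_wishartDensity_sub {n : ℕ} (η₁ η₂ : ℝ) (S : Matrix (Fin n) (Fin n) ℝ)
    (s x : SymMat n) :
    wishartDensity n η₁ S x * wishartDensity n η₂ S (s - x) =
      Real.exp (-(S⁻¹ * s.1).trace / 2) *
        (posDefDetRpow n (η₁ / 2 - ((n : ℝ) + 1) / 2) x *
          posDefDetRpow n (η₂ / 2 - ((n : ℝ) + 1) / 2) (s - x)).toReal := by
  unfold wishartDensity posDefDetRpow
  by_cases hx : x.1.PosDef
  swap
  · simp [hx]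
  by_cases hx' : (s - x).1.PosDef
  swap
  · rw [if_neg hx', if_neg hx']
    simp
  rw [if_pos hx, if_pos hx', if_pos hx, if_pos hx', ENNReal.toReal_mul,
    ENNReal.toReal_ofReal (Real.rpow_nonneg hx.det_pos.le _),
    ENNReal.toReal_ofReal (Real.rpow_nonneg hx'.det_pos.le _)]
  have hexp : Real.exp (-(S⁻¹ * s.1).trace / 2) = Real.exp (-(S⁻¹ * x.1).trace / 2) *
      Real.exp (-(S⁻¹ * (s - x).1).trace / 2) := by
    rw [← Real.exp_add]
    congr 1
    simp [Matrix.mul_sub]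
    ring
  rw [hexp]
  ring

theorem posDefDetRpow_ne_top {n : ℕ} (a : ℝ) (x : SymMat n) : posDefDetRpow n a x ≠ ∞ := by
  unfold posDefDetRpow
  split_ifs <;> simp

theorem integral_wishartDensity_mul {n : ℕ} (μ : Measure (SymMat n)) (η₁ η₂ : ℝ)
    (S : Matrix (Fin n) (Fin n) ℝ) (s : SymMat n) :
    ∫ x, wishartDensity n η₁ S x * wishartDensity n η₂ S (s - x) ∂μ =
      Real.exp (-(S⁻¹ * s.1).trace / 2) *
        (detRpowConv μ (η₁ / 2 - ((n : ℝ) + 1) / 2) (η₂ / 2 - ((n : ℝ) + 1) / 2) s).toReal := by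
  simp_rw [wishartDensity_mul_wishartDensity_sub]
  rw [integral_const_mul, integral_toReal (measurable_posDefDetRpow_mul _ _ s).aemeasurable
    (Filter.Eventually.of_forall fun x =>
      ENNReal.mul_lt_top (posDefDetRpow_ne_top _ _).lt_top (posDefDetRpow_ne_top _ _).lt_top),
    detRpowConv]

/-- Convolution of Wishart densities on `Sym_n(ℝ)`: for `η₁, η₂ > n − 1` and a common
symmetric positive definite scale `Σ`, there is a constant `c > 0` with
`∫ w_{η₁,Σ}(x) · w_{η₂,Σ}(s − x) dμ(x) = c · w_{η₁+η₂,Σ}(s)` for all `s`: the sum of two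
independent Wishart matrices with shapes `η₁, η₂` and scale `Σ` is Wishart with shape
`η₁ + η₂` and scale `Σ`. -/
theorem wishart_convolution {n : ℕ} (hn : 1 ≤ n)
    (μ : Measure (SymMat n)) [μ.IsAddHaarMeasure]
    (η₁ η₂ : ℝ) (hη₁ : (n : ℝ) - 1 < η₁) (hη₂ : (n : ℝ) - 1 < η₂)
    (S : Matrix (Fin n) (Fin n) ℝ) (hS : S.PosDef) (hSsymm : S.IsSymm) :
    ∃ c : ℝ, 0 < c ∧ ∀ s : SymMat n,
      (∫ x : SymMat n, wishartDensity n η₁ S x * wishartDensity n η₂ S (s - x) ∂μ) =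
        c * wishartDensity n (η₁ + η₂) S s := by
  set a := η₁ / 2 - ((n : ℝ) + 1) / 2 with ha
  set b := η₂ / 2 - ((n : ℝ) + 1) / 2 with hb
  have ha' : -1 < a := by linarith
  have hb' : -1 < b := by linarith
  refine ⟨(detRpowConv μ a b (symOne n)).toReal, ENNReal.toReal_pos
    (detRpowConv_one_ne_zero μ a b) (detRpowConv_one_ne_top μ ha' hb'), fun s => ?_⟩
  rw [integral_wishartDensity_mul, wishartDensity]
  by_cases hs : s.1.PosDef
  · have hexp : a + b + ((n : ℝ) + 1) / 2 = (η₁ + η₂) / 2 - ((n : ℝ) + 1) / 2 := by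
      rw [ha, hb]
      ring
    rw [if_pos hs, detRpowConv_of_posDef μ _ _ hs, ENNReal.toReal_mul,
      ENNReal.toReal_ofReal (Real.rpow_nonneg hs.det_pos.le _), ← hexp]
    ring
  · rw [if_neg hs, mul_zero, detRpowConv_of_not_posDef μ _ _ hs]
    simp
end

section
/- Let N ≥ r ≥ 1 be integers, let γ be the probability measure on the space of N×r real matrices under which all N·r entries are independent standard Gaussians (the product over Fin N × Fin r of the standard Gaussian measure on ℝ), and let μ be an additive Haar measure on the real vector space Sym_r(ℝ) of r×r real symmetric matrices. Then there exists a constant c > 0 such that the pushforward of γ under the map X ↦ Xᵀ·X (valued in Sym_r(ℝ)) equals the measure with density s ↦ c · exp(−tr(s)/2) · det(s)^{(N−r−1)/2} · 1_{s positive definite} with respect to μ. -/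
open MeasureTheory
open scoped ENNReal Matrix

open ProbabilityTheory

/-- `XᵀX` is symmetric. -/
theorem transpose_mul_self_mem_symMatSubmodule {N r : ℕ} (X : Matrix (Fin N) (Fin r) ℝ) :
    Xᵀ * X ∈ symMatSubmodule r := by
  show (Xᵀ * X)ᵀ = Xᵀ * X
  rw [Matrix.transpose_mul, Matrix.transpose_transpose]

section GramMeasure

open Matrix

section Determinants

theorem det_vecMulLinear {r : ℕ} (g : Matrix (Fin r) (Fin r) ℝ) :
    LinearMap.det (Matrix.vecMulLinear g) = g.det := by
  have : Matrix.vecMulLinear g = Matrix.toLin' gᵀ := by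
    ext i
    simp
  rw [this, LinearMap.det_toLin', Matrix.det_transpose]

/-- Right multiplication by `g` as an endomorphism of the space of `N × r` matrices. -/
def mulRightLin (N : ℕ) {r : ℕ} (g : Matrix (Fin r) (Fin r) ℝ) :
    Matrix (Fin N) (Fin r) ℝ →ₗ[ℝ] Matrix (Fin N) (Fin r) ℝ where
  toFun X := X * g
  map_add' X Y := Matrix.add_mul X Y g
  map_smul' c X := Matrix.smul_mul c X g

theorem det_mulRightLin (N : ℕ) {r : ℕ} (g : Matrix (Fin r) (Fin r) ℝ) :
    LinearMap.det (mulRightLin N g) = g.det ^ N := by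
  have h := LinearMap.det_pi (fun _ : Fin N => Matrix.vecMulLinear g)
  simp only [det_vecMulLinear, Finset.prod_const, Finset.card_univ, Fintype.card_fin] at h
  exact h

/-- Left multiplication by `h` as an endomorphism of the space of square matrices. -/
def mulLeftLin {r : ℕ} (h : Matrix (Fin r) (Fin r) ℝ) :
    Matrix (Fin r) (Fin r) ℝ →ₗ[ℝ] Matrix (Fin r) (Fin r) ℝ where
  toFun X := h * X
  map_add' X Y := Matrix.mul_add h X Y
  map_smul' c X := Matrix.mul_smul h c X

theorem det_mulLeftLin {r : ℕ} (h : Matrix (Fin r) (Fin r) ℝ) :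
    LinearMap.det (mulLeftLin h) = h.det ^ r := by
  have e := LinearMap.det_conj (mulRightLin r hᵀ)
    (Matrix.transposeLinearEquiv (Fin r) (Fin r) ℝ ℝ)
  rw [det_mulRightLin, Matrix.det_transpose] at e
  rw [← e]
  congr 1
  ext X : 1
  simp [mulRightLin, mulLeftLin]

theorem MonoidHom.map_transvection_eq_one {n : Type*} [Fintype n] [DecidableEq n]
    (δ : Matrix n n ℝ →* ℝ) (hδ : ∀ d : n → ℝ, (∀ i, d i ≠ 0) → δ (diagonal d) ≠ 0)
    {i j : n} (hij : i ≠ j) (c : ℝ) : δ (transvection i j c) = 1 := by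
  set D : n → ℝ := fun k => if k = i then 2 else 1 with hD
  have hD0 : δ (diagonal D) ≠ 0 := hδ _ fun k => by
    simp only [hD]; split_ifs <;> norm_num
  have hconj : diagonal D * transvection i j c =
      transvection i j c * transvection i j c * diagonal D := by
    rw [transvection_mul_transvection_same _ _ hij]
    ext a b
    simp only [diagonal_mul, mul_diagonal, transvection, Matrix.add_apply, single_apply, hD]
    rcases eq_or_ne a b with rfl | hab
    · grind
    · rw [Matrix.one_apply_ne hab]
      grind
  have h := congrArg δ hconj
  simp only [map_mul] at h
  have hinv : δ (transvection i j c) * δ (transvection i j (-c)) = 1 := by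
    rw [← map_mul, transvection_mul_transvection_same _ _ hij]
    simp
  have hne : δ (transvection i j c) ≠ 0 := left_ne_zero_of_mul_eq_one hinv
  have : δ (transvection i j c) * δ (diagonal D) * (δ (transvection i j c) - 1) = 0 := by
    linarith
  rcases mul_eq_zero.1 this with h0 | h0
  · exact absurd h0 (mul_ne_zero hne hD0)
  · linarith

theorem MonoidHom.eq_det_pow_of_diagonal {n : Type*} [Fintype n] [DecidableEq n]
    (δ : Matrix n n ℝ →* ℝ) (k : ℕ) (hδ : ∀ d : n → ℝ, δ (diagonal d) = (∏ i, d i) ^ k)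
    {g : Matrix n n ℝ} (hg : g.det ≠ 0) : δ g = g.det ^ k := by
  refine diagonal_transvection_induction_of_det_ne_zero (fun g => δ g = g.det ^ k) g hg
    (fun d _ => by rw [hδ, det_diagonal]) (fun t => ?_) (fun A B _ _ hA hB => ?_)
  · rw [TransvectionStruct.toMatrix, det_transvection_of_ne _ _ t.hij, one_pow]
    exact δ.map_transvection_eq_one (fun d hd => by
      rw [hδ]; exact pow_ne_zero _ (Finset.prod_ne_zero_iff.2 fun i _ => hd i)) t.hij t.c
  · rw [map_mul, hA, hB, det_mul, mul_pow]

/-- The congruence action `s ↦ gᵀ s g` on symmetric matrices. -/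
def congruence {r : ℕ} (g : Matrix (Fin r) (Fin r) ℝ) : SymMat r →ₗ[ℝ] SymMat r where
  toFun s := ⟨gᵀ * (s : Matrix (Fin r) (Fin r) ℝ) * g, by
    have hs : (s : Matrix (Fin r) (Fin r) ℝ)ᵀ = s := s.2
    change (gᵀ * (s : Matrix (Fin r) (Fin r) ℝ) * g)ᵀ = _
    simp only [Matrix.transpose_mul, Matrix.transpose_transpose, hs, Matrix.mul_assoc]⟩
  map_add' s t := Subtype.ext (by simp [Matrix.mul_add, Matrix.add_mul])
  map_smul' c s := Subtype.ext (by simp)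

@[simp]
theorem coe_congruence {r : ℕ} (g : Matrix (Fin r) (Fin r) ℝ) (s : SymMat r) :
    (congruence g s : Matrix (Fin r) (Fin r) ℝ) = gᵀ * (s : Matrix (Fin r) (Fin r) ℝ) * g := rfl

theorem congruence_congruence {r : ℕ} (g h : Matrix (Fin r) (Fin r) ℝ) (s : SymMat r) :
    congruence g (congruence h s) = congruence (h * g) s :=
  Subtype.ext (by simp [Matrix.mul_assoc])

theorem congruence_one {r : ℕ} (s : SymMat r) : congruence 1 s = s :=
  Subtype.ext (by simp)

/-- The entries on and above the diagonal are linear coordinates on `SymMat r`. -/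
def symMatEquivUpper (r : ℕ) :
    SymMat r ≃ₗ[ℝ] ({p : Fin r × Fin r // p.1 ≤ p.2} → ℝ) where
  toFun s p := (s : Matrix (Fin r) (Fin r) ℝ) p.1.1 p.1.2
  map_add' _ _ := rfl
  map_smul' _ _ := rfl
  invFun x := ⟨Matrix.of fun i j => x ⟨(min i j, max i j), min_le_max⟩, by
    change (Matrix.of _)ᵀ = _
    ext i j
    simp [min_comm, max_comm]⟩
  left_inv s := by
    refine Subtype.ext (Matrix.ext fun i j => ?_)
    have hs : ∀ i j, (s : Matrix (Fin r) (Fin r) ℝ) i j = (s : Matrix (Fin r) (Fin r) ℝ) j i :=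
      fun i j => Matrix.IsSymm.apply s.2 j i
    rcases le_total i j with h | h
    · simp [h]
    · simpa [h] using hs j i
  right_inv x := by
    ext ⟨⟨i, j⟩, h⟩
    have h' : i ≤ j := h
    simp [h']

theorem symMatEquivUpper_apply {r : ℕ} (s : SymMat r) (p : {p : Fin r × Fin r // p.1 ≤ p.2}) :
    symMatEquivUpper r s p = (s : Matrix (Fin r) (Fin r) ℝ) p.1.1 p.1.2 := rfl

theorem prod_upper_mul {r : ℕ} (d : Fin r → ℝ) :
    ∏ p : {p : Fin r × Fin r // p.1 ≤ p.2}, d p.1.1 * d p.1.2 = (∏ i, d i) ^ (r + 1) := by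
  rw [← Finset.prod_subtype (Finset.univ.filter fun p : Fin r × Fin r => p.1 ≤ p.2) (by simp)
    (fun p => d p.1 * d p.2), Finset.prod_mul_distrib]
  have h1 : ∏ p : Fin r × Fin r with p.1 ≤ p.2, d p.1 = ∏ i, d i ^ (r - i : ℕ) := by
    rw [Finset.prod_filter, Fintype.prod_prod_type]
    refine Finset.prod_congr rfl fun i _ => ?_
    rw [← Finset.prod_filter]
    have : (Finset.univ.filter fun j => i ≤ j) = Finset.Ici i := by ext; simp
    simp [this]
  have h2 : ∏ p : Fin r × Fin r with p.1 ≤ p.2, d p.2 = ∏ i, d i ^ (i + 1 : ℕ) := by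
    rw [Finset.prod_filter, Fintype.prod_prod_type_right]
    refine Finset.prod_congr rfl fun i _ => ?_
    rw [← Finset.prod_filter]
    have : (Finset.univ.filter fun j => j ≤ i) = Finset.Iic i := by ext; simp
    simp [this]
  rw [h1, h2, ← Finset.prod_mul_distrib, ← Finset.prod_pow]
  refine Finset.prod_congr rfl fun i _ => ?_
  rw [← pow_add]
  congr 1
  omega

theorem det_congruence_diagonal {r : ℕ} (d : Fin r → ℝ) :
    LinearMap.det (congruence (diagonal d)) = (∏ i, d i) ^ (r + 1) := by
  have h := LinearMap.det_pi
    (fun p : {p : Fin r × Fin r // p.1 ≤ p.2} =>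
      (d p.1.1 * d p.1.2) • LinearMap.id (R := ℝ) (M := ℝ))
  simp only [LinearMap.det_smul, Module.finrank_self, pow_one, LinearMap.det_id, mul_one,
    prod_upper_mul] at h
  rw [← h, ← LinearMap.det_conj (congruence (diagonal d)) (symMatEquivUpper r)]
  congr 1
  refine LinearMap.ext fun x => funext fun p => ?_
  obtain ⟨s, rfl⟩ := (symMatEquivUpper r).surjective x
  simp [symMatEquivUpper_apply]
  ring

theorem det_congruence {r : ℕ} {g : Matrix (Fin r) (Fin r) ℝ} (hg : g.det ≠ 0) :
    LinearMap.det (congruence g) = g.det ^ (r + 1) := by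
  let δ : Matrix (Fin r) (Fin r) ℝ →* ℝ :=
    { toFun := fun g => LinearMap.det (congruence g)
      map_one' := by
        rw [show congruence (1 : Matrix (Fin r) (Fin r) ℝ) = LinearMap.id from
          LinearMap.ext congruence_one, LinearMap.det_id]
      map_mul' := fun g h => by
        rw [mul_comm, ← LinearMap.det_comp]
        congr 1
        exact LinearMap.ext fun s => (congruence_congruence h g s).symm }
  exact δ.eq_det_pow_of_diagonal (r + 1) det_congruence_diagonal hg

end Determinants

section GramMap

/-- The Gram matrix `XᵀX` as a symmetric matrix. -/
def gram {N r : ℕ} (X : Matrix (Fin N) (Fin r) ℝ) : SymMat r :=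
  ⟨Xᵀ * X, transpose_mul_self_mem_symMatSubmodule X⟩

@[simp]
theorem coe_gram {N r : ℕ} (X : Matrix (Fin N) (Fin r) ℝ) :
    (gram X : Matrix (Fin r) (Fin r) ℝ) = Xᵀ * X := rfl

theorem congruence_gram {N r : ℕ} (g : Matrix (Fin r) (Fin r) ℝ) (X : Matrix (Fin N) (Fin r) ℝ) :
    congruence g (gram X) = gram (X * g) :=
  Subtype.ext (by simp [Matrix.mul_assoc])

theorem continuous_gram {N r : ℕ} :
    Continuous (gram : Matrix (Fin N) (Fin r) ℝ → SymMat r) := by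
  refine Continuous.subtype_mk ?_ _
  fun_prop

theorem continuous_congruence {r : ℕ} :
    Continuous fun p : Matrix (Fin r) (Fin r) ℝ × SymMat r => congruence p.1 p.2 := by
  refine Continuous.subtype_mk ?_ _
  fun_prop

theorem posSemidef_gram {N r : ℕ} (X : Matrix (Fin N) (Fin r) ℝ) :
    (gram X : Matrix (Fin r) (Fin r) ℝ).PosSemidef := by
  simpa [conjTranspose_eq_transpose_of_trivial] using posSemidef_conjTranspose_mul_self X

theorem exists_gram_eq_of_posSemidef {r : ℕ} {s : SymMat r}
    (hs : (s : Matrix (Fin r) (Fin r) ℝ).PosSemidef) :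
    ∃ h : Matrix (Fin r) (Fin r) ℝ, gram h = s := by
  open scoped MatrixOrder in
  obtain ⟨h, hh⟩ := CStarAlgebra.nonneg_iff_eq_star_mul_self.mp hs.nonneg
  refine ⟨h, Subtype.ext ?_⟩
  rw [hh, coe_gram, star_eq_conjTranspose, conjTranspose_eq_transpose_of_trivial]

theorem det_gram {r : ℕ} (h : Matrix (Fin r) (Fin r) ℝ) :
    (gram h : Matrix (Fin r) (Fin r) ℝ).det = h.det ^ 2 := by
  rw [coe_gram, det_mul, det_transpose, sq]

theorem det_congruence_apply {r : ℕ} (g : Matrix (Fin r) (Fin r) ℝ) (s : SymMat r) :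
    (congruence g s : Matrix (Fin r) (Fin r) ℝ).det =
      g.det ^ 2 * (s : Matrix (Fin r) (Fin r) ℝ).det := by
  rw [coe_congruence, det_mul, det_mul, det_transpose]
  ring

theorem posDef_congruence_iff {r : ℕ} {g : Matrix (Fin r) (Fin r) ℝ} (hg : g.det ≠ 0)
    (s : SymMat r) : (congruence g s : Matrix (Fin r) (Fin r) ℝ).PosDef ↔
      (s : Matrix (Fin r) (Fin r) ℝ).PosDef := by
  have hu : IsUnit g := (isUnit_iff_isUnit_det g).2 hg.isUnit
  have := Matrix.IsUnit.posDef_star_left_conjugate_iff (x := (s : Matrix (Fin r) (Fin r) ℝ)) hu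
  rwa [star_eq_conjTranspose, conjTranspose_eq_transpose_of_trivial] at this

theorem exists_gram_eq_of_posDef {r : ℕ} {s : SymMat r}
    (hs : (s : Matrix (Fin r) (Fin r) ℝ).PosDef) :
    ∃ h : Matrix (Fin r) (Fin r) ℝ, h.det ≠ 0 ∧ gram h = s := by
  obtain ⟨h, rfl⟩ := exists_gram_eq_of_posSemidef hs.posSemidef
  refine ⟨h, fun h0 => ?_, rfl⟩
  have := hs.det_pos
  rw [det_gram, h0] at this
  norm_num at this

theorem continuous_det_symMat {r : ℕ} :
    Continuous fun s : SymMat r => (s : Matrix (Fin r) (Fin r) ℝ).det :=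
  continuous_subtype_val.matrix_det

theorem continuous_trace_symMat {r : ℕ} :
    Continuous fun s : SymMat r => (s : Matrix (Fin r) (Fin r) ℝ).trace :=
  continuous_subtype_val.matrix_trace

theorem isClosed_posSemidef {r : ℕ} :
    IsClosed {s : SymMat r | (s : Matrix (Fin r) (Fin r) ℝ).PosSemidef} := by
  have : {s : SymMat r | (s : Matrix (Fin r) (Fin r) ℝ).PosSemidef} =
      ⋂ x : Fin r → ℝ, {s : SymMat r | 0 ≤ x ⬝ᵥ ((s : Matrix (Fin r) (Fin r) ℝ) *ᵥ x)} := by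
    ext s
    have hs : (s : Matrix (Fin r) (Fin r) ℝ).IsHermitian := by
      rw [Matrix.IsHermitian, conjTranspose_eq_transpose_of_trivial]; exact s.2
    simp only [posSemidef_iff_dotProduct_mulVec, hs, true_and, star_trivial, Set.mem_iInter,
      Set.mem_ofPred_eq]
  rw [this]
  refine isClosed_iInter fun x => isClosed_le continuous_const ?_
  exact continuous_const.dotProduct (continuous_subtype_val.matrix_mulVec continuous_const)

theorem trace_gram {N r : ℕ} (X : Matrix (Fin N) (Fin r) ℝ) :
    (gram X : Matrix (Fin r) (Fin r) ℝ).trace = ∑ j, ∑ i, X i j ^ 2 := by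
  simp [Matrix.trace, Matrix.mul_apply, sq]

/-- A bounded neighbourhood of the identity, relative to the positive semidefinite cone, which
stays away from the boundary of the cone. -/
def testSet (r : ℕ) : Set (SymMat r) :=
  {s | (s : Matrix (Fin r) (Fin r) ℝ).PosSemidef ∧
    (1 / 2 < (s : Matrix (Fin r) (Fin r) ℝ).det ∧ (s : Matrix (Fin r) (Fin r) ℝ).det < 2) ∧
      (s : Matrix (Fin r) (Fin r) ℝ).trace < r + 1}

theorem posDef_of_mem_testSet {r : ℕ} {s : SymMat r} (hs : s ∈ testSet r) :
    (s : Matrix (Fin r) (Fin r) ℝ).PosDef :=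
  hs.1.posDef_iff_det_ne_zero.2 (by linarith [hs.2.1.1])

theorem isOpen_det_trace {r : ℕ} : IsOpen {s : SymMat r |
    (1 / 2 < (s : Matrix (Fin r) (Fin r) ℝ).det ∧ (s : Matrix (Fin r) (Fin r) ℝ).det < 2) ∧
      (s : Matrix (Fin r) (Fin r) ℝ).trace < r + 1} :=
  ((isOpen_lt continuous_const continuous_det_symMat).inter
    (isOpen_lt continuous_det_symMat continuous_const)).inter
    (isOpen_lt continuous_trace_symMat continuous_const)

end GramMap

section Analysis

instance borelSpace_matrix {m n : ℕ} : BorelSpace (Matrix (Fin m) (Fin n) ℝ) :=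
  inferInstanceAs (BorelSpace (Fin m → Fin n → ℝ))

instance secondCountableTopology_matrix {m n : ℕ} :
    SecondCountableTopology (Matrix (Fin m) (Fin n) ℝ) :=
  inferInstanceAs (SecondCountableTopology (Fin m → Fin n → ℝ))

theorem measurableSet_posSemidef {r : ℕ} :
    MeasurableSet {s : SymMat r | (s : Matrix (Fin r) (Fin r) ℝ).PosSemidef} :=
  isClosed_posSemidef.measurableSet

theorem measurableSet_posDef {r : ℕ} :
    MeasurableSet {s : SymMat r | (s : Matrix (Fin r) (Fin r) ℝ).PosDef} := by
  have : {s : SymMat r | (s : Matrix (Fin r) (Fin r) ℝ).PosDef} =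
      {s : SymMat r | (s : Matrix (Fin r) (Fin r) ℝ).PosSemidef} ∩
        {s : SymMat r | (s : Matrix (Fin r) (Fin r) ℝ).det ≠ 0} := by
    ext s
    exact ⟨fun h => ⟨h.posSemidef, h.det_pos.ne'⟩, fun h => h.1.posDef_iff_det_ne_zero.2 h.2⟩
  rw [this]
  exact measurableSet_posSemidef.inter
    (isOpen_ne_fun continuous_det_symMat continuous_const).measurableSet

theorem measurableSet_testSet {r : ℕ} : MeasurableSet (testSet r) :=
  measurableSet_posSemidef.inter isOpen_det_trace.measurableSet

theorem lintegral_comp_linearMap {E : Type*} [AddCommGroup E] [Module ℝ E] [TopologicalSpace E]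
    [IsTopologicalAddGroup E] [ContinuousSMul ℝ E] [T2Space E] [FiniteDimensional ℝ E]
    [MeasurableSpace E] [BorelSpace E] (η : Measure E) [η.IsAddHaarMeasure] {A : E →ₗ[ℝ] E}
    (hA : LinearMap.det A ≠ 0) {f : E → ℝ≥0∞} (hf : Measurable f) :
    ∫⁻ x, f (A x) ∂η = ENNReal.ofReal |(LinearMap.det A)⁻¹| * ∫⁻ x, f x ∂η := by
  let e : E ≃L[ℝ] (Fin (Module.finrank ℝ E) → ℝ) := ContinuousLinearEquiv.ofFinrankEq (by simp)
  have he : Measurable e := e.continuous.measurable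
  have he' : Measurable e.symm := e.symm.continuous.measurable
  let B := e.toLinearEquiv.toLinearMap ∘ₗ A ∘ₗ e.toLinearEquiv.symm.toLinearMap
  have hB : LinearMap.det B = LinearMap.det A := LinearMap.det_conj A e.toLinearEquiv
  have hBA : ∀ x, e.symm (B (e x)) = A x := fun x => by simp [B]
  have hfe : Measurable fun y => f (e.symm y) := hf.comp he'
  have hBm : Measurable B := B.continuous_of_finiteDimensional.measurable
  have hmap := Measure.map_linearMap_addHaar_eq_smul_addHaar (η.map e) (f := B) (by rwa [hB])
  calc ∫⁻ x, f (A x) ∂η = ∫⁻ x, f (e.symm (B (e x))) ∂η := by simp only [hBA]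
    _ = ∫⁻ y, f (e.symm (B y)) ∂(η.map e) := (lintegral_map (hfe.comp hBm) he).symm
    _ = ∫⁻ y, f (e.symm y) ∂((η.map e).map B) := (lintegral_map hfe hBm).symm
    _ = ENNReal.ofReal |(LinearMap.det A)⁻¹| * ∫⁻ y, f (e.symm y) ∂(η.map e) := by
      rw [hmap, lintegral_smul_measure, smul_eq_mul, hB]
    _ = _ := by rw [lintegral_map hfe he]; simp

theorem isCompact_abs_entry_le (m n : ℕ) (R : ℝ) :
    IsCompact {X : Matrix (Fin m) (Fin n) ℝ | ∀ i j, |X i j| ≤ R} := by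
  have : {X : Matrix (Fin m) (Fin n) ℝ | ∀ i j, |X i j| ≤ R} =
      Set.univ.pi fun _ : Fin m => Set.univ.pi fun _ : Fin n => Set.Icc (-R) R :=
    Set.ext fun X => ⟨fun h i _ j _ => abs_le.1 (h i j),
      fun h i j => abs_le.2 (h i trivial j trivial)⟩
  rw [this]
  exact isCompact_univ_pi fun _ => isCompact_univ_pi fun _ => isCompact_Icc

theorem abs_entry_le_of_trace_gram_le {N r : ℕ} {X : Matrix (Fin N) (Fin r) ℝ} {R : ℝ}
    (hR : 1 ≤ R) (h : (gram X : Matrix (Fin r) (Fin r) ℝ).trace ≤ R) (i : Fin N) (j : Fin r) :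
    |X i j| ≤ R := by
  have h1 : X i j ^ 2 ≤ R := by
    rw [trace_gram] at h
    refine le_trans ?_ h
    refine le_trans ?_ (Finset.single_le_sum (f := fun j => ∑ i, X i j ^ 2)
      (fun j _ => Finset.sum_nonneg fun i _ => sq_nonneg _) (Finset.mem_univ j))
    exact Finset.single_le_sum (f := fun i => X i j ^ 2) (fun i _ => sq_nonneg _)
      (Finset.mem_univ i)
  exact abs_le_of_sq_le_sq (by nlinarith) (by linarith)

theorem measure_testSet_lt_top {r : ℕ} (μ : Measure (SymMat r)) [IsFiniteMeasureOnCompacts μ] :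
    μ (testSet r) < ∞ := by
  have hK := (isCompact_abs_entry_le r r (r + 1)).image continuous_gram
  refine lt_of_le_of_lt (measure_mono fun s hs => ?_) hK.measure_lt_top
  obtain ⟨h, rfl⟩ := exists_gram_eq_of_posSemidef hs.1
  exact ⟨h, abs_entry_le_of_trace_gram_le (by simp) hs.2.2.le, rfl⟩

theorem measure_gram_preimage_testSet_lt_top {N r : ℕ} (η : Measure (Matrix (Fin N) (Fin r) ℝ))
    [IsFiniteMeasureOnCompacts η] : η (gram ⁻¹' testSet r) < ∞ :=
  lt_of_le_of_lt
    (measure_mono fun _ hX => abs_entry_le_of_trace_gram_le (R := r + 1) (by simp) hX.2.2.le)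
    (isCompact_abs_entry_le N r (r + 1)).measure_lt_top

/-- The `N × r` matrix whose upper block is the identity. -/
def blockOne (N r : ℕ) : Matrix (Fin N) (Fin r) ℝ :=
  Matrix.of fun i j => if (i : ℕ) = j then 1 else 0

theorem gram_blockOne {N r : ℕ} (h : r ≤ N) :
    (gram (blockOne N r) : Matrix (Fin r) (Fin r) ℝ) = 1 := by
  ext i j
  have key : ∀ (i : Fin r) (k : Fin N), ((k : ℕ) = i) ↔ k = Fin.castLE h i := fun i k => by
    simp [Fin.ext_iff]
  simp [blockOne, Matrix.mul_apply, Matrix.one_apply, key, eq_comm (a := i)]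

theorem measure_gram_preimage_testSet_pos {N r : ℕ} (h : r ≤ N)
    (η : Measure (Matrix (Fin N) (Fin r) ℝ)) [η.IsOpenPosMeasure] :
    0 < η (gram ⁻¹' testSet r) := by
  have : gram (N := N) ⁻¹' testSet r = gram ⁻¹' {s : SymMat r |
    (1 / 2 < (s : Matrix (Fin r) (Fin r) ℝ).det ∧ (s : Matrix (Fin r) (Fin r) ℝ).det < 2) ∧
      (s : Matrix (Fin r) (Fin r) ℝ).trace < r + 1} := by
    ext X
    exact ⟨fun hX => hX.2, fun hX => ⟨posSemidef_gram X, hX⟩⟩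
  rw [this]
  refine (isOpen_det_trace.preimage continuous_gram).measure_pos η ⟨blockOne N r, ?_⟩
  simp only [Set.mem_preimage, Set.mem_ofPred_eq, gram_blockOne h]
  norm_num

theorem posSemidef_of_abs_sub_one_le {r : ℕ} {s : SymMat r} {ε : ℝ} (hε : 0 ≤ ε) (hrε : r * ε ≤ 1)
    (hs : ∀ i j, |((s : Matrix (Fin r) (Fin r) ℝ) - 1) i j| ≤ ε) :
    (s : Matrix (Fin r) (Fin r) ℝ).PosSemidef := by
  have hh : (s : Matrix (Fin r) (Fin r) ℝ).IsHermitian := by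
    rw [Matrix.IsHermitian, conjTranspose_eq_transpose_of_trivial]; exact s.2
  refine PosSemidef.of_dotProduct_mulVec_nonneg hh fun x => ?_
  set E := (s : Matrix (Fin r) (Fin r) ℝ) - 1 with hE
  have hsE : (s : Matrix (Fin r) (Fin r) ℝ) = 1 + E := by simp [hE]
  have h1 : -(ε * (∑ i, |x i|) ^ 2) ≤ x ⬝ᵥ (E *ᵥ x) := by
    refine neg_le_of_neg_le (le_trans (neg_le_abs _) ?_)
    simp only [dotProduct, Matrix.mulVec, Finset.mul_sum]
    rw [sq, Finset.sum_mul_sum, Finset.mul_sum]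
    refine (Finset.abs_sum_le_sum_abs _ _).trans (Finset.sum_le_sum fun i _ => ?_)
    rw [Finset.mul_sum]
    refine (Finset.abs_sum_le_sum_abs _ _).trans (Finset.sum_le_sum fun j _ => ?_)
    rw [abs_mul, abs_mul]
    have := mul_le_mul_of_nonneg_right (hs i j) (mul_nonneg (abs_nonneg (x i)) (abs_nonneg (x j)))
    linarith
  have h2 : (∑ i, |x i|) ^ 2 ≤ r * ∑ i, x i ^ 2 := by
    simpa using sq_sum_le_card_mul_sum_sq (s := Finset.univ) (f := fun i => |x i|)
  have h3 : x ⬝ᵥ x = ∑ i, x i ^ 2 := by simp [dotProduct, sq]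
  have h4 : 0 ≤ ∑ i, x i ^ 2 := Finset.sum_nonneg fun i _ => sq_nonneg _
  rw [hsE, Matrix.add_mulVec, Matrix.one_mulVec, dotProduct_add, star_trivial, h3]
  nlinarith [mul_le_mul_of_nonneg_left h2 hε]

theorem measure_testSet_pos {r : ℕ} (μ : Measure (SymMat r)) [μ.IsOpenPosMeasure] :
    0 < μ (testSet r) := by
  have hr : (0 : ℝ) < r + 1 := by positivity
  have h1 : IsOpen {s : SymMat r |
      ∀ i j, |((s : Matrix (Fin r) (Fin r) ℝ) - 1) i j| < (r + 1 : ℝ)⁻¹} := by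
    simp only [Set.ofPred_forall]
    refine isOpen_iInter_of_finite fun i => isOpen_iInter_of_finite fun j =>
      isOpen_lt (Continuous.abs ?_) continuous_const
    exact Continuous.matrix_elem (by fun_prop) i j
  refine lt_of_lt_of_le ((h1.inter isOpen_det_trace).measure_pos μ
    ⟨gram (1 : Matrix (Fin r) (Fin r) ℝ), ?_⟩) (measure_mono fun s hs =>
      ⟨posSemidef_of_abs_sub_one_le (inv_nonneg.2 hr.le) ?_ fun i j => (hs.1 i j).le, hs.2⟩)
  · simp only [Set.mem_inter_iff, Set.mem_ofPred_eq, coe_gram, transpose_one, one_mul, sub_self,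
      Matrix.zero_apply, abs_zero, det_one, trace_one, Fintype.card_fin]
    exact ⟨fun _ _ => inv_pos.2 hr, by norm_num⟩
  · rw [mul_inv_le_iff₀ hr]
    linarith

end Analysis

section RelativeInvariance

/-- A measure on `SymMat r` carried by the positive definite cone which is relatively invariant
under congruences, with multiplier `|det g| ^ (-N)`. -/
structure IsRelativelyInvariant {r : ℕ} (N : ℕ) (ν : Measure (SymMat r)) : Prop where
  ae_posDef : ∀ᵐ s : SymMat r ∂ν, (s : Matrix (Fin r) (Fin r) ℝ).PosDef
  lintegral_congruence : ∀ g : Matrix (Fin r) (Fin r) ℝ, g.det ≠ 0 → ∀ f : SymMat r → ℝ≥0∞,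
    Measurable f → ∫⁻ s, f (congruence g s) ∂ν = ENNReal.ofReal (|g.det|⁻¹ ^ N) * ∫⁻ s, f s ∂ν

theorem ofReal_inv_pow_mul_ofReal_pow {x : ℝ} (hx : x ≠ 0) (N : ℕ) :
    ENNReal.ofReal (|x|⁻¹ ^ N) * ENNReal.ofReal (|x| ^ N) = 1 := by
  rw [← ENNReal.ofReal_mul (by positivity), ← mul_pow, inv_mul_cancel₀ (abs_ne_zero.2 hx)]
  simp

theorem measurable_ofReal_abs_det_pow {r : ℕ} (N : ℕ) :
    Measurable fun g : Matrix (Fin r) (Fin r) ℝ => ENNReal.ofReal (|g.det| ^ N) := by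
  have : Measurable fun g : Matrix (Fin r) (Fin r) ℝ => g.det :=
    continuous_id.matrix_det.measurable
  fun_prop

theorem measurable_ofReal_abs_det_inv_pow {r : ℕ} (N : ℕ) :
    Measurable fun g : Matrix (Fin r) (Fin r) ℝ => ENNReal.ofReal (|g.det|⁻¹ ^ N) := by
  have : Measurable fun g : Matrix (Fin r) (Fin r) ℝ => g.det :=
    continuous_id.matrix_det.measurable
  fun_prop

theorem measurable_matrix_inv {r : ℕ} :
    Measurable fun g : Matrix (Fin r) (Fin r) ℝ => g⁻¹ := by
  have h1 : Measurable fun g : Matrix (Fin r) (Fin r) ℝ => g.det :=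
    continuous_id.matrix_det.measurable
  have h2 : Measurable fun g : Matrix (Fin r) (Fin r) ℝ => g.adjugate :=
    continuous_id.matrix_adjugate.measurable
  have h3 : Continuous fun p : ℝ × Matrix (Fin r) (Fin r) ℝ => p.1 • p.2 := by fun_prop
  simp only [Matrix.inv_def, Ring.inverse_eq_inv']
  exact h3.measurable.comp (h1.inv.prodMk h2)

theorem lintegral_mul_right {N r : ℕ} (η : Measure (Matrix (Fin N) (Fin r) ℝ))
    [η.IsAddHaarMeasure] {g : Matrix (Fin r) (Fin r) ℝ} (hg : g.det ≠ 0)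
    {f : Matrix (Fin N) (Fin r) ℝ → ℝ≥0∞} (hf : Measurable f) :
    ∫⁻ X, f (X * g) ∂η = ENNReal.ofReal (|g.det|⁻¹ ^ N) * ∫⁻ X, f X ∂η := by
  have h := lintegral_comp_linearMap η (A := mulRightLin N g)
    (by rw [det_mulRightLin]; exact pow_ne_zero _ hg) hf
  rwa [det_mulRightLin, abs_inv, abs_pow, ← inv_pow] at h

theorem lintegral_mul_left {r : ℕ} (η : Measure (Matrix (Fin r) (Fin r) ℝ))
    [η.IsAddHaarMeasure] {h : Matrix (Fin r) (Fin r) ℝ} (hh : h.det ≠ 0)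
    {f : Matrix (Fin r) (Fin r) ℝ → ℝ≥0∞} (hf : Measurable f) :
    ∫⁻ X, f (h * X) ∂η = ENNReal.ofReal (|h.det|⁻¹ ^ r) * ∫⁻ X, f X ∂η := by
  have h := lintegral_comp_linearMap η (A := mulLeftLin h)
    (by rw [det_mulLeftLin]; exact pow_ne_zero _ hh) hf
  rwa [det_mulLeftLin, abs_inv, abs_pow, ← inv_pow] at h

/-- The bi-invariant measure `|det g| ^ (-r) dg` on the general linear group, as a measure on the
space of all square matrices. -/
noncomputable def glHaar {r : ℕ} (η : Measure (Matrix (Fin r) (Fin r) ℝ)) :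
    Measure (Matrix (Fin r) (Fin r) ℝ) :=
  η.withDensity fun g => ENNReal.ofReal (|g.det|⁻¹ ^ r)

instance sFinite_glHaar {r : ℕ} (η : Measure (Matrix (Fin r) (Fin r) ℝ)) [SFinite η] :
    SFinite (glHaar η) := by
  unfold glHaar; infer_instance

theorem lintegral_glHaar {r : ℕ} (η : Measure (Matrix (Fin r) (Fin r) ℝ))
    {f : Matrix (Fin r) (Fin r) ℝ → ℝ≥0∞} (hf : Measurable f) :
    ∫⁻ g, f g ∂(glHaar η) = ∫⁻ g, ENNReal.ofReal (|g.det|⁻¹ ^ r) * f g ∂η :=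
  lintegral_withDensity_eq_lintegral_mul _ (measurable_ofReal_abs_det_inv_pow r) hf

theorem lintegral_glHaar_mul_left {r : ℕ} (η : Measure (Matrix (Fin r) (Fin r) ℝ))
    [η.IsAddHaarMeasure] {h : Matrix (Fin r) (Fin r) ℝ} (hh : h.det ≠ 0)
    {f : Matrix (Fin r) (Fin r) ℝ → ℝ≥0∞} (hf : Measurable f) :
    ∫⁻ g, f (h * g) ∂(glHaar η) = ∫⁻ g, f g ∂(glHaar η) := by
  have hm : Measurable fun g : Matrix (Fin r) (Fin r) ℝ => h * g :=
    (continuous_const.matrix_mul continuous_id).measurable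
  have hF : Measurable fun g : Matrix (Fin r) (Fin r) ℝ =>
      ENNReal.ofReal (|g.det|⁻¹ ^ r) * f g := (measurable_ofReal_abs_det_inv_pow r).mul hf
  have hFh : Measurable fun g : Matrix (Fin r) (Fin r) ℝ =>
      ENNReal.ofReal (|(h * g).det|⁻¹ ^ r) * f (h * g) := hF.comp hm
  rw [lintegral_glHaar η hf, lintegral_glHaar η (f := fun g => f (h * g)) (hf.comp hm)]
  calc _ = ∫⁻ g, ENNReal.ofReal (|h.det| ^ r) *
        (ENNReal.ofReal (|(h * g).det|⁻¹ ^ r) * f (h * g)) ∂η := by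
        refine lintegral_congr fun g => ?_
        rw [← mul_assoc, ← ENNReal.ofReal_mul (by positivity), ← mul_pow, det_mul, abs_mul,
          mul_inv, ← mul_assoc, mul_inv_cancel₀ (abs_ne_zero.2 hh), one_mul]
    _ = _ := by
        rw [lintegral_const_mul _ hFh, lintegral_mul_left η hh hF, ← mul_assoc,
          mul_comm (ENNReal.ofReal _), ofReal_inv_pow_mul_ofReal_pow hh, one_mul]

theorem lintegral_glHaar_mul_right {r : ℕ} (η : Measure (Matrix (Fin r) (Fin r) ℝ))
    [η.IsAddHaarMeasure] {h : Matrix (Fin r) (Fin r) ℝ} (hh : h.det ≠ 0)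
    {f : Matrix (Fin r) (Fin r) ℝ → ℝ≥0∞} (hf : Measurable f) :
    ∫⁻ g, f (g * h) ∂(glHaar η) = ∫⁻ g, f g ∂(glHaar η) := by
  have hm : Measurable fun g : Matrix (Fin r) (Fin r) ℝ => g * h :=
    (continuous_id.matrix_mul continuous_const).measurable
  have hF : Measurable fun g : Matrix (Fin r) (Fin r) ℝ =>
      ENNReal.ofReal (|g.det|⁻¹ ^ r) * f g := (measurable_ofReal_abs_det_inv_pow r).mul hf
  have hFh : Measurable fun g : Matrix (Fin r) (Fin r) ℝ =>
      ENNReal.ofReal (|(g * h).det|⁻¹ ^ r) * f (g * h) := hF.comp hm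
  rw [lintegral_glHaar η hf, lintegral_glHaar η (f := fun g => f (g * h)) (hf.comp hm)]
  calc _ = ∫⁻ g, ENNReal.ofReal (|h.det| ^ r) *
        (ENNReal.ofReal (|(g * h).det|⁻¹ ^ r) * f (g * h)) ∂η := by
        refine lintegral_congr fun g => ?_
        rw [← mul_assoc, ← ENNReal.ofReal_mul (by positivity), ← mul_pow, det_mul, abs_mul,
          mul_inv, mul_left_comm, mul_inv_cancel₀ (abs_ne_zero.2 hh), mul_one]
    _ = _ := by
        rw [lintegral_const_mul _ hFh, lintegral_mul_right η hh hF, ← mul_assoc,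
          mul_comm (ENNReal.ofReal _), ofReal_inv_pow_mul_ofReal_pow hh, one_mul]

theorem ae_lintegral_congruence_mul {N r : ℕ} {ν : Measure (SymMat r)}
    (hν : IsRelativelyInvariant N ν) (η : Measure (Matrix (Fin r) (Fin r) ℝ))
    [η.IsAddHaarMeasure] {φ ψ : SymMat r → ℝ≥0∞} (hφ : Measurable φ) :
    ∀ᵐ s : SymMat r ∂ν, ∫⁻ g, φ (congruence g s) * ψ s * ENNReal.ofReal (|g.det| ^ N)
      ∂(glHaar η) = (∫⁻ g, φ (gram g) * ENNReal.ofReal (|g.det| ^ N) ∂(glHaar η)) *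
        (ψ s * ENNReal.ofReal ((√(s : Matrix (Fin r) (Fin r) ℝ).det)⁻¹ ^ N)) := by
  have hL : Measurable fun g : Matrix (Fin r) (Fin r) ℝ =>
      φ (gram g) * ENNReal.ofReal (|g.det| ^ N) :=
    (hφ.comp continuous_gram.measurable).mul (measurable_ofReal_abs_det_pow N)
  filter_upwards [hν.ae_posDef] with s hs
  obtain ⟨h, hh, rfl⟩ := exists_gram_eq_of_posDef hs
  have hm : Measurable fun g : Matrix (Fin r) (Fin r) ℝ => h * g :=
    (continuous_const.matrix_mul continuous_id).measurable
  have hLh : Measurable fun g : Matrix (Fin r) (Fin r) ℝ =>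
      φ (gram (h * g)) * ENNReal.ofReal (|(h * g).det| ^ N) := hL.comp hm
  have key := lintegral_glHaar_mul_left η hh hL
  have e : ∀ g : Matrix (Fin r) (Fin r) ℝ,
      φ (congruence g (gram h)) * ψ (gram h) * ENNReal.ofReal (|g.det| ^ N) =
      φ (gram (h * g)) * ENNReal.ofReal (|(h * g).det| ^ N) *
        (ψ (gram h) * ENNReal.ofReal (|h.det|⁻¹ ^ N)) := fun g => by
    rw [congruence_gram, det_mul, abs_mul, mul_pow, ENNReal.ofReal_mul (by positivity)]
    calc _ = φ (gram (h * g)) * ψ (gram h) * ENNReal.ofReal (|g.det| ^ N) *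
          (ENNReal.ofReal (|h.det|⁻¹ ^ N) * ENNReal.ofReal (|h.det| ^ N)) := by
          rw [ofReal_inv_pow_mul_ofReal_pow hh, mul_one]
      _ = _ := by ring
  rw [det_gram, Real.sqrt_sq_eq_abs, ← key, ← lintegral_mul_const _ hLh]
  simp only [e]

theorem lintegral_congruence_mul_eq {N r : ℕ} {ν : Measure (SymMat r)}
    (hν : IsRelativelyInvariant N ν) {g : Matrix (Fin r) (Fin r) ℝ} (hg : g.det ≠ 0)
    {φ ψ : SymMat r → ℝ≥0∞} (hφ : Measurable φ) (hψ : Measurable ψ) :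
    ∫⁻ s, φ (congruence g s) * ψ s * ENNReal.ofReal (|g.det| ^ N) ∂ν =
      ∫⁻ s, φ s * ψ (congruence g⁻¹ s) ∂ν := by
  have hact : ∀ g : Matrix (Fin r) (Fin r) ℝ, Measurable fun s => congruence g s :=
    fun g => (congruence g).continuous_of_finiteDimensional.measurable
  have hF : Measurable fun s => φ s * ψ (congruence g⁻¹ s) := hφ.mul (hψ.comp (hact g⁻¹))
  have key := hν.lintegral_congruence g hg _ hF
  have hcancel : ∀ s, congruence g⁻¹ (congruence g s) = s := fun s => by
    rw [congruence_congruence, mul_nonsing_inv _ hg.isUnit, congruence_one]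
  have hFg : Measurable fun s => φ (congruence g s) * ψ s := (hφ.comp (hact g)).mul hψ
  simp only [hcancel] at key
  rw [lintegral_mul_const _ hFg, key, mul_comm, ← mul_assoc,
    mul_comm (ENNReal.ofReal (|g.det| ^ N)), ofReal_inv_pow_mul_ofReal_pow hg, one_mul]

theorem ae_lintegral_congruence_inv {N r : ℕ} {ν : Measure (SymMat r)}
    (hν : IsRelativelyInvariant N ν) (η : Measure (Matrix (Fin r) (Fin r) ℝ))
    [η.IsAddHaarMeasure] {φ ψ : SymMat r → ℝ≥0∞} (hψ : Measurable ψ) :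
    ∀ᵐ s : SymMat r ∂ν, ∫⁻ g, φ s * ψ (congruence g⁻¹ s) ∂(glHaar η) =
      (∫⁻ g, ψ (gram g⁻¹) ∂(glHaar η)) * φ s := by
  have hK : Measurable fun g : Matrix (Fin r) (Fin r) ℝ => ψ (gram g⁻¹) :=
    hψ.comp (continuous_gram.measurable.comp measurable_matrix_inv)
  filter_upwards [hν.ae_posDef] with s hs
  obtain ⟨h, hh, rfl⟩ := exists_gram_eq_of_posDef hs
  have hh' : (h⁻¹).det ≠ 0 := by
    rw [det_nonsing_inv, Ring.inverse_eq_inv']; exact inv_ne_zero hh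
  have hm : Measurable fun g : Matrix (Fin r) (Fin r) ℝ => g * h⁻¹ :=
    (continuous_id.matrix_mul continuous_const).measurable
  have hKh : Measurable fun g : Matrix (Fin r) (Fin r) ℝ => ψ (gram (g * h⁻¹)⁻¹) := hK.comp hm
  have key := lintegral_glHaar_mul_right η hh' hK
  have e : ∀ g : Matrix (Fin r) (Fin r) ℝ,
      congruence g⁻¹ (gram h) = gram (g * h⁻¹)⁻¹ := fun g => by
    rw [congruence_gram, Matrix.mul_inv_rev, nonsing_inv_nonsing_inv _ hh.isUnit]
  simp only [e]
  rw [← key, lintegral_const_mul _ hKh, mul_comm]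

theorem measurable_congruence_prod {r : ℕ} :
    Measurable fun p : Matrix (Fin r) (Fin r) ℝ × SymMat r => congruence p.1 p.2 :=
  continuous_congruence.measurable

theorem measurable_congruence {α : Type*} [MeasurableSpace α] {r : ℕ}
    {f : α → Matrix (Fin r) (Fin r) ℝ} {h : α → SymMat r} (hf : Measurable f)
    (hh : Measurable h) : Measurable fun a => congruence (f a) (h a) := by
  have := measurable_congruence_prod.comp (hf.prodMk hh)
  exact this

theorem lintegral_gram_inv_mul_lintegral {N r : ℕ} {ν : Measure (SymMat r)} [SFinite ν]
    (hν : IsRelativelyInvariant N ν) (η : Measure (Matrix (Fin r) (Fin r) ℝ))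
    [η.IsAddHaarMeasure] [SFinite η] (hη : ∀ᵐ g ∂η, g.det ≠ 0) {φ ψ : SymMat r → ℝ≥0∞}
    (hφ : Measurable φ) (hψ : Measurable ψ) :
    (∫⁻ g, ψ (gram g⁻¹) ∂(glHaar η)) * ∫⁻ s, φ s ∂ν =
      (∫⁻ g, φ (gram g) * ENNReal.ofReal (|g.det| ^ N) ∂(glHaar η)) *
        ∫⁻ s, ψ s * ENNReal.ofReal ((√(s : Matrix (Fin r) (Fin r) ℝ).det)⁻¹ ^ N) ∂ν := by
  have hη' : ∀ᵐ g ∂(glHaar η), g.det ≠ 0 := (withDensity_absolutelyContinuous η _).ae_le hη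
  have hw : Measurable fun s : SymMat r =>
      ENNReal.ofReal ((√(s : Matrix (Fin r) (Fin r) ℝ).det)⁻¹ ^ N) := by
    have := continuous_det_symMat (r := r) |>.measurable
    fun_prop
  have hψw : Measurable fun s : SymMat r =>
      ψ s * ENNReal.ofReal ((√(s : Matrix (Fin r) (Fin r) ℝ).det)⁻¹ ^ N) := hψ.mul hw
  have hdet := measurable_ofReal_abs_det_pow (r := r) N
  have a1 : Measurable fun p : SymMat r × Matrix (Fin r) (Fin r) ℝ => congruence p.2 p.1 :=
    measurable_congruence measurable_snd measurable_fst
  have a2 : Measurable fun p : Matrix (Fin r) (Fin r) ℝ × SymMat r => congruence p.1⁻¹ p.2 :=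
    measurable_congruence (measurable_matrix_inv.comp measurable_fst) measurable_snd
  have m1 : Measurable fun p : SymMat r × Matrix (Fin r) (Fin r) ℝ =>
      φ (congruence p.2 p.1) * ψ p.1 * ENNReal.ofReal (|p.2.det| ^ N) :=
    ((hφ.comp a1).mul (hψ.comp measurable_fst)).mul (hdet.comp measurable_snd)
  have m2 : Measurable fun p : Matrix (Fin r) (Fin r) ℝ × SymMat r =>
      φ p.2 * ψ (congruence p.1⁻¹ p.2) :=
    (hφ.comp measurable_snd).mul (hψ.comp a2)
  have inner : ∀ᵐ g ∂(glHaar η),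
      ∫⁻ s, φ (congruence g s) * ψ s * ENNReal.ofReal (|g.det| ^ N) ∂ν =
        ∫⁻ s, φ s * ψ (congruence g⁻¹ s) ∂ν := by
    filter_upwards [hη'] with g hg using lintegral_congruence_mul_eq hν hg hφ hψ
  have s1 : ∫⁻ s, ∫⁻ g, φ (congruence g s) * ψ s * ENNReal.ofReal (|g.det| ^ N) ∂(glHaar η) ∂ν =
      ∫⁻ g, ∫⁻ s, φ (congruence g s) * ψ s * ENNReal.ofReal (|g.det| ^ N) ∂ν ∂(glHaar η) :=
    lintegral_lintegral_swap m1.aemeasurable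
  have s2 : ∫⁻ g, ∫⁻ s, φ s * ψ (congruence g⁻¹ s) ∂ν ∂(glHaar η) =
      ∫⁻ s, ∫⁻ g, φ s * ψ (congruence g⁻¹ s) ∂(glHaar η) ∂ν :=
    lintegral_lintegral_swap m2.aemeasurable
  rw [lintegral_congr_ae (ae_lintegral_congruence_mul hν η hφ),
    lintegral_const_mul _ hψw] at s1
  rw [lintegral_congr_ae (ae_lintegral_congruence_inv hν η hψ),
    lintegral_const_mul _ hφ] at s2
  rw [← s2, ← lintegral_congr_ae inner, ← s1]

end RelativeInvariance

section Uniqueness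

theorem lintegral_indicator_mul_ne {α : Type*} [MeasurableSpace α] {m : Measure α} {S : Set α}
    (hS : MeasurableSet S) (h0 : m S ≠ 0) (hT : m S ≠ ∞) {d : α → ℝ}
    (hd : ∀ x ∈ S, d x ∈ Set.Icc (1 / 2 : ℝ) 2) {p : ℝ → ℝ}
    (hp : ContinuousOn p (Set.Icc (1 / 2) 2)) (hpos : ∀ x ∈ Set.Icc (1 / 2 : ℝ) 2, 0 < p x) :
    ∫⁻ x, S.indicator 1 x * ENNReal.ofReal (p (d x)) ∂m ≠ 0 ∧
      ∫⁻ x, S.indicator 1 x * ENNReal.ofReal (p (d x)) ∂m ≠ ∞ := by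
  have hne : (Set.Icc (1 / 2 : ℝ) 2).Nonempty := ⟨1, by norm_num, by norm_num⟩
  obtain ⟨a, ha, hamin⟩ := isCompact_Icc.exists_isMinOn hne hp
  obtain ⟨b, hb, hbmax⟩ := isCompact_Icc.exists_isMaxOn hne hp
  have hconst : ∀ c : ℝ≥0∞, ∫⁻ x, S.indicator 1 x * c ∂m = c * m S := fun c => by
    rw [lintegral_mul_const _ (measurable_one.indicator hS), lintegral_indicator_one hS, mul_comm]
  have hlow : ENNReal.ofReal (p a) * m S ≤ ∫⁻ x, S.indicator 1 x * ENNReal.ofReal (p (d x)) ∂m := by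
    rw [← hconst]
    refine lintegral_mono fun x => ?_
    by_cases hx : x ∈ S
    · simpa [hx] using ENNReal.ofReal_le_ofReal (hamin (hd x hx))
    · simp [hx]
  have hup : ∫⁻ x, S.indicator 1 x * ENNReal.ofReal (p (d x)) ∂m ≤ ENNReal.ofReal (p b) * m S := by
    rw [← hconst]
    refine lintegral_mono fun x => ?_
    by_cases hx : x ∈ S
    · simpa [hx] using ENNReal.ofReal_le_ofReal (hbmax (hd x hx))
    · simp [hx]
  refine ⟨fun h => ?_, fun h => ?_⟩
  · rw [h, nonpos_iff_eq_zero, mul_eq_zero] at hlow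
    exact hlow.elim (ENNReal.ofReal_pos.2 (hpos a ha)).ne' h0
  · rw [h, top_le_iff] at hup
    exact ENNReal.mul_ne_top ENNReal.ofReal_ne_top hT hup

theorem det_mem_Icc_of_mem_testSet {r : ℕ} {s : SymMat r} (hs : s ∈ testSet r) :
    (s : Matrix (Fin r) (Fin r) ℝ).det ∈ Set.Icc (1 / 2 : ℝ) 2 :=
  ⟨hs.2.1.1.le, hs.2.1.2.le⟩

theorem IsRelativelyInvariant.exists_eq_smul {N r : ℕ} {ν ν' : Measure (SymMat r)} [SFinite ν]
    [SFinite ν'] (hν : IsRelativelyInvariant N ν) (hν' : IsRelativelyInvariant N ν')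
    (η : Measure (Matrix (Fin r) (Fin r) ℝ)) [η.IsAddHaarMeasure] [SFinite η]
    (hη : ∀ᵐ g ∂η, g.det ≠ 0) (h0 : ν (testSet r) ≠ 0) (hT : ν (testSet r) ≠ ∞)
    (h0' : ν' (testSet r) ≠ 0) (hT' : ν' (testSet r) ≠ ∞) :
    ∃ c : ℝ≥0∞, c ≠ 0 ∧ c ≠ ∞ ∧ ν = c • ν' := by
  set ψ : SymMat r → ℝ≥0∞ := (testSet r).indicator 1 with hψ_def
  have hψ : Measurable ψ := measurable_one.indicator measurableSet_testSet
  have hp : ContinuousOn (fun x : ℝ => (√x)⁻¹ ^ N) (Set.Icc (1 / 2) 2) := by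
    refine ContinuousOn.pow (ContinuousOn.inv₀ (by fun_prop) fun x hx => ?_) N
    have := hx.1
    positivity
  have hpos : ∀ x ∈ Set.Icc (1 / 2 : ℝ) 2, 0 < (√x)⁻¹ ^ N := fun x hx => by
    have : 0 < x := by linarith [hx.1]
    positivity
  have hA := lintegral_indicator_mul_ne measurableSet_testSet h0 hT
    (fun s hs => det_mem_Icc_of_mem_testSet hs) hp hpos
  have hA' := lintegral_indicator_mul_ne measurableSet_testSet h0' hT'
    (fun s hs => det_mem_Icc_of_mem_testSet hs) hp hpos
  have hgram : Measurable (gram : Matrix (Fin r) (Fin r) ℝ → SymMat r) :=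
    continuous_gram.measurable
  have hL : ∫⁻ g, ψ (gram g) * ENNReal.ofReal (|g.det| ^ N) ∂(glHaar η) ≠ 0 ∧
      ∫⁻ g, ψ (gram g) * ENNReal.ofReal (|g.det| ^ N) ∂(glHaar η) ≠ ∞ := by
    have hm : Measurable fun g : Matrix (Fin r) (Fin r) ℝ =>
        ψ (gram g) * ENNReal.ofReal (|g.det| ^ N) :=
      (hψ.comp hgram).mul (measurable_ofReal_abs_det_pow N)
    rw [lintegral_glHaar η hm]
    have hq : ContinuousOn (fun x : ℝ => (√x)⁻¹ ^ r * √x ^ N) (Set.Icc (1 / 2) 2) := by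
      refine (ContinuousOn.pow (ContinuousOn.inv₀ (by fun_prop) fun x hx => ?_) r).mul
        (by fun_prop)
      have := hx.1
      positivity
    have key := lintegral_indicator_mul_ne (m := η) (d := fun g => g.det ^ 2)
      (hgram measurableSet_testSet) (measure_gram_preimage_testSet_pos le_rfl η).ne'
      (measure_gram_preimage_testSet_lt_top η).ne
      (fun g hg => det_gram g ▸ det_mem_Icc_of_mem_testSet hg) hq (fun x hx => by
        have : 0 < x := by linarith [hx.1]
        positivity)
    have e : ∀ g : Matrix (Fin r) (Fin r) ℝ,
        ENNReal.ofReal (|g.det|⁻¹ ^ r) * (ψ (gram g) * ENNReal.ofReal (|g.det| ^ N)) =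
        (gram ⁻¹' testSet r).indicator 1 g *
          ENNReal.ofReal ((√(g.det ^ 2))⁻¹ ^ r * √(g.det ^ 2) ^ N) := fun g => by
      rw [Real.sqrt_sq_eq_abs, ENNReal.ofReal_mul (by positivity), mul_left_comm]
      rfl
    simpa only [e] using key
  have main : ∀ φ : SymMat r → ℝ≥0∞, Measurable φ → _ := fun φ hφ =>
    lintegral_gram_inv_mul_lintegral hν η hη hφ hψ
  have main' : ∀ φ : SymMat r → ℝ≥0∞, Measurable φ → _ := fun φ hφ =>
    lintegral_gram_inv_mul_lintegral hν' η hη hφ hψ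
  set A := ∫⁻ s, ψ s * ENNReal.ofReal ((√(s : Matrix (Fin r) (Fin r) ℝ).det)⁻¹ ^ N) ∂ν
  set A' := ∫⁻ s, ψ s * ENNReal.ofReal ((√(s : Matrix (Fin r) (Fin r) ℝ).det)⁻¹ ^ N) ∂ν'
  set K := ∫⁻ g, ψ (gram g⁻¹) ∂(glHaar η)
  have hψν : ∫⁻ s, ψ s ∂ν = ν (testSet r) := lintegral_indicator_one measurableSet_testSet
  have hKψ := main ψ hψ
  rw [hψν] at hKψ
  have hK0 : K ≠ 0 := fun h => by
    rw [h, zero_mul, eq_comm, mul_eq_zero] at hKψ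
    exact hKψ.elim hL.1 hA.1
  have hKT : K ≠ ∞ := fun h => by
    rw [h, ENNReal.top_mul h0] at hKψ
    exact ENNReal.mul_ne_top hL.2 hA.2 hKψ.symm
  refine ⟨A / A', ENNReal.div_ne_zero.2 ⟨hA.1, hA'.2⟩, ENNReal.div_ne_top hA.2 hA'.1, ?_⟩
  ext S hS
  have hφ : Measurable (S.indicator (1 : SymMat r → ℝ≥0∞)) := measurable_one.indicator hS
  have h1 := main _ hφ
  have h2 := main' _ hφ
  rw [lintegral_indicator_one hS] at h1 h2
  rw [Measure.smul_apply, smul_eq_mul, ← ENNReal.mul_right_inj hK0 hKT, mul_left_comm, h1, h2,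
    mul_left_comm, ENNReal.div_mul_cancel hA'.1 hA'.2]

end Uniqueness

section Volume

theorem finite_det_gram_smul_add_eq_zero {N r : ℕ} (Y Z : Matrix (Fin N) (Fin r) ℝ)
    (hZ : (gram Z : Matrix (Fin r) (Fin r) ℝ).det ≠ 0) :
    {u : ℝ | (gram (u • Y + Z) : Matrix (Fin r) (Fin r) ℝ).det = 0}.Finite := by
  let M : Matrix (Fin N) (Fin r) (Polynomial ℝ) :=
    (Polynomial.X : Polynomial ℝ) • Y.map Polynomial.C + Z.map Polynomial.C
  have hM : ∀ u : ℝ, M.map (Polynomial.evalRingHom u) = u • Y + Z := fun u => by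
    ext i j
    simp [M, mul_comm u]
  have hq : ∀ u : ℝ, (Mᵀ * M).det.eval u = (gram (u • Y + Z) : Matrix (Fin r) (Fin r) ℝ).det :=
    fun u => by
      rw [← Polynomial.coe_evalRingHom, RingHom.map_det, RingHom.mapMatrix_apply, Matrix.map_mul,
        Matrix.transpose_map, hM, coe_gram]
  have hq0 : (Mᵀ * M).det ≠ 0 := fun h => hZ <| by simpa [h] using (hq 0).symm
  simpa only [Polynomial.IsRoot.def, hq] using Polynomial.finite_setOfPred_isRoot hq0

theorem finite_det_gram_add_smul_eq_zero {N r : ℕ} (Y Z : Matrix (Fin N) (Fin r) ℝ)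
    (hZ : (gram Z : Matrix (Fin r) (Fin r) ℝ).det ≠ 0) :
    {t : ℝ | (gram (Y + t • Z) : Matrix (Fin r) (Fin r) ℝ).det = 0}.Finite := by
  refine (((finite_det_gram_smul_add_eq_zero Y Z hZ).preimage inv_injective.injOn).insert
    0).subset fun t ht => ?_
  rcases eq_or_ne t 0 with rfl | h0
  · exact Set.mem_insert _ _
  refine Set.mem_insert_of_mem _ ?_
  have e : Y + t • Z = t • (t⁻¹ • Y + Z) := by rw [smul_add, smul_inv_smul₀ h0]
  have ht' : (gram (Y + t • Z) : Matrix (Fin r) (Fin r) ℝ).det = 0 := ht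
  rw [e, coe_gram, transpose_smul, Matrix.smul_mul, Matrix.mul_smul, smul_smul, det_smul] at ht'
  exact (mul_eq_zero.1 ht').resolve_left (by positivity)

/-- A vector indexed by pairs, seen as a matrix. -/
noncomputable def matrixEquiv (N r : ℕ) :
    (Fin N × Fin r → ℝ) ≃L[ℝ] Matrix (Fin N) (Fin r) ℝ :=
  ((LinearEquiv.curry ℝ ℝ (Fin N) (Fin r)).trans
    (Matrix.ofLinearEquiv ℝ)).toContinuousLinearEquiv

theorem measurable_matrixEquiv {N r : ℕ} : Measurable (matrixEquiv N r) :=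
  (matrixEquiv N r).continuous.measurable

/-- Lebesgue measure on the space of matrices. -/
noncomputable def matrixVolume (N r : ℕ) : Measure (Matrix (Fin N) (Fin r) ℝ) :=
  (volume : Measure (Fin N × Fin r → ℝ)).map (matrixEquiv N r)

instance isAddHaarMeasure_matrixVolume (N r : ℕ) : (matrixVolume N r).IsAddHaarMeasure :=
  (matrixEquiv N r).isAddHaarMeasure_map volume

instance sFinite_matrixVolume (N r : ℕ) : SFinite (matrixVolume N r) := by
  unfold matrixVolume; infer_instance

theorem ae_det_gram_ne_zero {N r : ℕ} (h : r ≤ N) :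
    ∀ᵐ X : Matrix (Fin N) (Fin r) ℝ ∂(matrixVolume N r),
      (gram X : Matrix (Fin r) (Fin r) ℝ).det ≠ 0 := by
  have hcont : Continuous fun X : Matrix (Fin N) (Fin r) ℝ =>
      (gram X : Matrix (Fin r) (Fin r) ℝ).det := continuous_det_symMat.comp continuous_gram
  have hs : MeasurableSet {X : Matrix (Fin N) (Fin r) ℝ |
      (gram X : Matrix (Fin r) (Fin r) ℝ).det ≠ 0} :=
    (isOpen_ne_fun hcont continuous_const).measurableSet
  unfold matrixVolume
  rw [ae_map_iff measurable_matrixEquiv.aemeasurable hs]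
  obtain ⟨z, hz⟩ := (matrixEquiv N r).surjective (blockOne N r)
  refine ae_mem_of_ae_add_linearMap_mem (LinearMap.toSpanSingleton ℝ _ z) volume volume
    (measurable_matrixEquiv hs) fun y => ?_
  have hfin := finite_det_gram_add_smul_eq_zero (matrixEquiv N r y) (blockOne N r)
    (by rw [gram_blockOne h, det_one]; exact one_ne_zero)
  filter_upwards [hfin.countable.ae_notMem volume] with t ht
  have e : matrixEquiv N r (y + t • z) = matrixEquiv N r y + t • blockOne N r := by
    rw [map_add, map_smul, hz]
  show (gram (matrixEquiv N r (y + t • z)) : Matrix (Fin r) (Fin r) ℝ).det ≠ 0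
  rw [e]
  exact ht

theorem ae_det_ne_zero (r : ℕ) : ∀ᵐ g ∂(matrixVolume r r), g.det ≠ 0 := by
  filter_upwards [ae_det_gram_ne_zero le_rfl] with g hg h0
  exact hg (by rw [det_gram, h0, sq, mul_zero])

theorem isRelativelyInvariant_map_gram {N r : ℕ} (h : r ≤ N) :
    IsRelativelyInvariant N ((matrixVolume N r).map gram) where
  ae_posDef := by
    rw [ae_map_iff continuous_gram.measurable.aemeasurable measurableSet_posDef]
    filter_upwards [ae_det_gram_ne_zero h] with X hX
    exact (posSemidef_gram X).posDef_iff_det_ne_zero.2 hX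
  lintegral_congruence g hg f hf := by
    have hgram : Measurable (gram : Matrix (Fin N) (Fin r) ℝ → SymMat r) :=
      continuous_gram.measurable
    have hc : Measurable fun s => congruence g s :=
      (congruence g).continuous_of_finiteDimensional.measurable
    have hfc : Measurable fun s => f (congruence g s) := hf.comp hc
    have hfg : Measurable fun X : Matrix (Fin N) (Fin r) ℝ => f (gram X) := hf.comp hgram
    rw [lintegral_map hfc hgram, lintegral_map hf hgram, ← lintegral_mul_right _ hg hfg]
    simp only [congruence_gram]

/-- The density of the Wishart distribution, up to the exponential factor. -/
noncomputable def conePower {r : ℕ} (a : ℝ) (s : SymMat r) : ℝ≥0∞ :=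
  open Classical in
  if (s : Matrix (Fin r) (Fin r) ℝ).PosDef then
    ENNReal.ofReal ((s : Matrix (Fin r) (Fin r) ℝ).det ^ a) else 0

theorem measurable_conePower {r : ℕ} (a : ℝ) : Measurable (conePower (r := r) a) := by
  have := continuous_det_symMat (r := r) |>.measurable
  unfold conePower
  exact Measurable.ite measurableSet_posDef (by fun_prop) measurable_const

theorem conePower_congruence {r : ℕ} {g : Matrix (Fin r) (Fin r) ℝ} (hg : g.det ≠ 0) (a : ℝ)
    (s : SymMat r) :
    conePower a (congruence g s) = ENNReal.ofReal (|g.det| ^ (2 * a)) * conePower a s := by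
  unfold conePower
  rw [posDef_congruence_iff hg]
  split_ifs with hs
  · have h0 := abs_pos.2 hg
    rw [det_congruence_apply, ← sq_abs, Real.mul_rpow (by positivity) hs.det_pos.le,
      ENNReal.ofReal_mul (by positivity), ← Real.rpow_natCast, ← Real.rpow_mul h0.le]
    norm_num
  · simp

theorem isRelativelyInvariant_withDensity_conePower {N r : ℕ} (μ : Measure (SymMat r))
    [μ.IsAddHaarMeasure] :
    IsRelativelyInvariant N (μ.withDensity (conePower (((N : ℝ) - r - 1) / 2))) where
  ae_posDef := by
    rw [ae_withDensity_iff (measurable_conePower _)]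
    refine Filter.Eventually.of_forall fun s hs => ?_
    by_contra h
    exact hs (if_neg h)
  lintegral_congruence g hg f hf := by
    set a := ((N : ℝ) - r - 1) / 2 with ha
    have hc : Measurable fun s => congruence g s :=
      (congruence g).continuous_of_finiteDimensional.measurable
    have hfc : Measurable fun s => f (congruence g s) := hf.comp hc
    have hF : Measurable fun s => conePower a s * f s := (measurable_conePower a).mul hf
    have hFc : Measurable fun s => conePower a (congruence g s) * f (congruence g s) :=
      hF.comp hc
    have h0 := abs_pos.2 hg
    have hdet : LinearMap.det (congruence g) ≠ 0 := by
      rw [det_congruence hg]; exact pow_ne_zero _ hg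
    have key := lintegral_comp_linearMap μ hdet hF
    rw [det_congruence hg, abs_inv, abs_pow] at key
    have e : ∀ s : SymMat r, conePower a s * f (congruence g s) =
        ENNReal.ofReal (|g.det| ^ (-(2 * a))) *
          (conePower a (congruence g s) * f (congruence g s)) := fun s => by
      rw [conePower_congruence hg, ← mul_assoc, ← mul_assoc, ← ENNReal.ofReal_mul (by positivity),
        ← Real.rpow_add h0, neg_add_cancel, Real.rpow_zero, ENNReal.ofReal_one, one_mul]
    rw [lintegral_withDensity_eq_lintegral_mul _ (measurable_conePower a) hfc,
      lintegral_withDensity_eq_lintegral_mul _ (measurable_conePower a) hf]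
    simp only [Pi.mul_apply, e]
    rw [lintegral_const_mul _ hFc, key, ← mul_assoc, ← ENNReal.ofReal_mul (by positivity)]
    congr 2
    rw [← Real.rpow_natCast, ← Real.rpow_natCast, ← Real.rpow_neg h0.le, ← Real.rpow_add h0,
      Real.inv_rpow h0.le, ← Real.rpow_neg h0.le]
    congr 1
    rw [ha]
    push_cast
    ring

end Volume

section Gaussian

theorem pi_withDensity_ofReal {ι : Type*} [Fintype ι] {p : ℝ → ℝ} (hp : Integrable p)
    (h0 : ∀ x, 0 ≤ p x)
    [SigmaFinite ((volume : Measure ℝ).withDensity fun x => ENNReal.ofReal (p x))] :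
    (Measure.pi fun _ : ι => (volume : Measure ℝ).withDensity fun x => ENNReal.ofReal (p x)) =
      (volume : Measure (ι → ℝ)).withDensity fun v => ENNReal.ofReal (∏ i, p (v i)) := by
  refine Measure.pi_eq fun s hs => ?_
  rw [withDensity_apply _ (MeasurableSet.univ_pi hs), volume_pi, Measure.restrict_pi_pi,
    ← ofReal_integral_eq_lintegral_ofReal
      (Integrable.fintype_prod (f := fun _ : ι => p) fun i => hp.restrict)
      (Filter.Eventually.of_forall fun v => Finset.prod_nonneg fun i _ => h0 _),
    integral_fintype_prod_eq_prod (fun _ : ι => p),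
    ENNReal.ofReal_prod_of_nonneg fun i _ => integral_nonneg h0]
  refine Finset.prod_congr rfl fun i _ => ?_
  rw [withDensity_apply _ (hs i), ofReal_integral_eq_lintegral_ofReal hp.restrict
    (Filter.Eventually.of_forall h0)]

theorem pi_gaussianReal_eq_withDensity (ι : Type*) [Fintype ι] :
    (Measure.pi fun _ : ι => gaussianReal 0 1) =
      (volume : Measure (ι → ℝ)).withDensity fun v =>
        ENNReal.ofReal ((√(2 * Real.pi))⁻¹ ^ Fintype.card ι *
          Real.exp (-(∑ i, v i ^ 2) / 2)) := by
  have h1 : gaussianReal 0 1 =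
      (volume : Measure ℝ).withDensity fun x => ENNReal.ofReal (gaussianPDFReal 0 1 x) :=
    gaussianReal_of_var_ne_zero 0 one_ne_zero
  have : SigmaFinite ((volume : Measure ℝ).withDensity fun x =>
      ENNReal.ofReal (gaussianPDFReal 0 1 x)) := by rw [← h1]; infer_instance
  rw [h1, pi_withDensity_ofReal (integrable_gaussianPDFReal 0 1) (gaussianPDFReal_nonneg 0 1)]
  congr with v
  simp [gaussianPDFReal_def, Finset.prod_mul_distrib, ← Real.exp_sum, Finset.sum_div,
    Finset.sum_neg_distrib, neg_div]

theorem map_withDensity_comp {α β : Type*} [MeasurableSpace α] [MeasurableSpace β] (m : Measure α)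
    {T : α → β} (hT : Measurable T) {f : β → ℝ≥0∞} (hf : Measurable f) :
    (m.withDensity fun x => f (T x)).map T = (m.map T).withDensity f := by
  ext s hs
  rw [Measure.map_apply hT hs, withDensity_apply _ (hT hs), withDensity_apply _ hs,
    setLIntegral_map hs hf hT]

end Gaussian

section Normalization

theorem conePower_of_mem_testSet {r : ℕ} (a : ℝ) {s : SymMat r} (hs : s ∈ testSet r) :
    conePower a s = ENNReal.ofReal ((s : Matrix (Fin r) (Fin r) ℝ).det ^ a) :=
  if_pos (posDef_of_mem_testSet hs)

theorem withDensity_conePower_testSet_ne {r : ℕ} (μ : Measure (SymMat r)) [μ.IsAddHaarMeasure]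
    (a : ℝ) : μ.withDensity (conePower a) (testSet r) ≠ 0 ∧
      μ.withDensity (conePower a) (testSet r) ≠ ∞ := by
  have key := lintegral_indicator_mul_ne (m := μ) measurableSet_testSet
    (measure_testSet_pos μ).ne' (measure_testSet_lt_top μ).ne
    (fun s hs => det_mem_Icc_of_mem_testSet hs) (p := fun x => x ^ a)
    (continuousOn_id.rpow_const fun x hx => Or.inl (by have := hx.1; positivity))
    (fun x hx => Real.rpow_pos_of_pos (by linarith [hx.1]) a)
  have e : ∀ s : SymMat r, (testSet r).indicator 1 s *
      ENNReal.ofReal ((s : Matrix (Fin r) (Fin r) ℝ).det ^ a) =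
      (testSet r).indicator (conePower a) s := fun s => by
    by_cases hs : s ∈ testSet r
    · simp [hs, conePower_of_mem_testSet a hs]
    · simp [hs]
  simp only [e] at key
  rwa [lintegral_indicator measurableSet_testSet, ← withDensity_apply _ measurableSet_testSet]
    at key

instance sigmaCompactSpace_symMat {r : ℕ} : SigmaCompactSpace (SymMat r) :=
  let e : SymMat r ≃L[ℝ] (Fin (Module.finrank ℝ (SymMat r)) → ℝ) :=
    ContinuousLinearEquiv.ofFinrankEq (by simp)
  e.toHomeomorph.isClosedEmbedding.sigmaCompactSpace

theorem exists_map_gram_eq_smul {N r : ℕ} (h : r ≤ N) (μ : Measure (SymMat r))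
    [μ.IsAddHaarMeasure] : ∃ c : ℝ≥0∞, c ≠ 0 ∧ c ≠ ∞ ∧
      (matrixVolume N r).map gram = c • μ.withDensity (conePower (((N : ℝ) - r - 1) / 2)) := by
  have hgram : Measurable (gram : Matrix (Fin N) (Fin r) ℝ → SymMat r) :=
    continuous_gram.measurable
  have hT := withDensity_conePower_testSet_ne μ (((N : ℝ) - r - 1) / 2)
  refine (isRelativelyInvariant_map_gram h).exists_eq_smul
    (isRelativelyInvariant_withDensity_conePower μ) (matrixVolume r r) (ae_det_ne_zero r)
    ?_ ?_ hT.1 hT.2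
  · rw [Measure.map_apply hgram measurableSet_testSet]
    exact (measure_gram_preimage_testSet_pos h _).ne'
  · rw [Measure.map_apply hgram measurableSet_testSet]
    exact (measure_gram_preimage_testSet_lt_top _).ne

end Normalization

end GramMeasure

open Classical in
/-- If the entries of an `N × r` real matrix `X` are i.i.d. standard Gaussians, then
`XᵀX`, as a random element of `Sym_r(ℝ)`, has density proportional to
`exp(−tr(s)/2)·det(s)^{(N−r−1)/2}·1_{s ≻ 0}` with respect to an additive Haar measure `μ`
on `Sym_r(ℝ)`: that is, `XᵀX` is Wishart with shape `N` and identity scale. -/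
theorem gaussian_quadratic_is_wishart {N r : ℕ} (hr : 1 ≤ r) (hNr : r ≤ N)
    (μ : Measure (SymMat r)) [μ.IsAddHaarMeasure] :
    ∃ c : ℝ, 0 < c ∧
      (Measure.pi fun _ : Fin N × Fin r => gaussianReal 0 1).map
        (fun v : Fin N × Fin r → ℝ =>
          (⟨(Matrix.of fun i j => v (i, j))ᵀ * (Matrix.of fun i j => v (i, j)),
            transpose_mul_self_mem_symMatSubmodule _⟩ : SymMat r)) =
      μ.withDensity fun s : SymMat r => ENNReal.ofReal
        (if (s : Matrix (Fin r) (Fin r) ℝ).PosDef then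
          c * Real.exp (-(s : Matrix (Fin r) (Fin r) ℝ).trace / 2) *
            (s : Matrix (Fin r) (Fin r) ℝ).det ^ (((N : ℝ) - r - 1) / 2)
        else 0) := by
  obtain ⟨c, hc0, hcT, hc⟩ := exists_map_gram_eq_smul hNr μ
  have hc' : 0 < c.toReal := ENNReal.toReal_pos hc0 hcT
  set C : ℝ := (√(2 * Real.pi))⁻¹ ^ Fintype.card (Fin N × Fin r) with hC
  have hC0 : 0 < C := by positivity
  refine ⟨c.toReal * C, by positivity, ?_⟩
  have hQ : Measurable fun v : Fin N × Fin r → ℝ => gram (matrixEquiv N r v) :=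
    continuous_gram.measurable.comp measurable_matrixEquiv
  have hF : Measurable fun s : SymMat r =>
      ENNReal.ofReal (C * Real.exp (-(s : Matrix (Fin r) (Fin r) ℝ).trace / 2)) := by
    have := (continuous_trace_symMat (r := r)).measurable
    fun_prop
  have hmap : (volume : Measure (Fin N × Fin r → ℝ)).map (fun v => gram (matrixEquiv N r v)) =
      (matrixVolume N r).map gram :=
    (Measure.map_map continuous_gram.measurable measurable_matrixEquiv).symm
  have hγ : (Measure.pi fun _ : Fin N × Fin r => gaussianReal 0 1) =
      (volume : Measure (Fin N × Fin r → ℝ)).withDensity fun v => ENNReal.ofReal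
        (C * Real.exp (-(gram (matrixEquiv N r v) : Matrix (Fin r) (Fin r) ℝ).trace / 2)) := by
    rw [pi_gaussianReal_eq_withDensity]
    congr with v
    rw [trace_gram, Fintype.sum_prod_type_right]
    rfl
  change (Measure.pi fun _ : Fin N × Fin r => gaussianReal 0 1).map
    (fun v => gram (matrixEquiv N r v)) = _
  rw [hγ, map_withDensity_comp volume hQ hF, hmap, hc, withDensity_smul_measure,
    ← withDensity_mul _ (measurable_conePower _) hF,
    ← withDensity_smul _ ((measurable_conePower _).mul hF)]
  congr with s
  simp only [Pi.smul_apply, Pi.mul_apply, smul_eq_mul, conePower]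
  split_ifs with hs
  · have hd := Real.rpow_nonneg hs.det_pos.le (((N : ℝ) - r - 1) / 2)
    nth_rewrite 1 [← ENNReal.ofReal_toReal hcT]
    rw [← ENNReal.ofReal_mul hd, ← ENNReal.ofReal_mul hc'.le]
    congr 1
    ring
  · simp
end

section
/- Let n > 2 be an integer and η > n−2 a real number. On ℝ × ℝ^{n−1} with Lebesgue measure, let W be the measure with density w(t, x) = exp(−t) · (t² − ‖x‖²)^{η/2 − n/2} · 1_{t > ‖x‖}, where ‖·‖ is the Euclidean norm on ℝ^{n−1} and the power is the real power of a positive real. Then there exists a constant c > 0 such that the pushforward of W under the map (t, x) ↦ (t + ‖x‖, t − ‖x‖) ∈ ℝ² equals the measure on ℝ² with density (ξ₁, ξ₂) ↦ c · 1_{ξ₁ > ξ₂ > 0} · exp(−(ξ₁ + ξ₂)/2) · (ξ₁ξ₂)^{η/2 − n/2} · (ξ₁ − ξ₂)^{n−2} with respect to Lebesgue measure on ℝ². -/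
open MeasureTheory
open scoped ENNReal

open Set Module in
/-- Integration of a radial function in polar coordinates, for the lower Lebesgue integral. -/
theorem lintegral_fun_norm_addHaar {E : Type*} [NormedAddCommGroup E] [NormedSpace ℝ E]
    [Nontrivial E] [FiniteDimensional ℝ E] [MeasurableSpace E] [BorelSpace E]
    (μ : Measure E) [μ.IsAddHaarMeasure] {f : ℝ → ℝ≥0∞} (hf : Measurable f) :
    ∫⁻ x, f ‖x‖ ∂μ =
      μ.toSphere univ * ∫⁻ r in Ioi (0 : ℝ), ENNReal.ofReal (r ^ (finrank ℝ E - 1)) * f r := by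
  have hf' : Measurable fun r : Ioi (0 : ℝ) => f r := hf.comp measurable_subtype_coe
  calc
    ∫⁻ x, f ‖x‖ ∂μ = ∫⁻ x : ({(0)}ᶜ : Set E), f ‖x.1‖ ∂(μ.comap (↑)) := by
      rw [lintegral_subtype_comap (measurableSet_singleton _).compl fun x ↦ f ‖x‖,
        restrict_compl_singleton]
    _ = ∫⁻ x, f x.2 ∂μ.toSphere.prod (.volumeIoiPow (finrank ℝ E - 1)) := by
      simpa using μ.measurePreserving_homeomorphUnitSphereProd.lintegral_comp
        (f := fun x => f x.2) (hf'.comp measurable_snd)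
    _ = μ.toSphere univ * ∫⁻ r : Ioi (0 : ℝ), f r ∂.volumeIoiPow (finrank ℝ E - 1) := by
      rw [lintegral_prod (fun x : _ × Ioi (0 : ℝ) => f x.2) (hf'.comp measurable_snd).aemeasurable]
      simp only [lintegral_const, mul_comm]
    _ = _ := by
      rw [Measure.volumeIoiPow, lintegral_withDensity_eq_lintegral_mul _ (by fun_prop) hf',
        ← lintegral_subtype_comap measurableSet_Ioi]
      rfl

/-- Pushing a measure with density `g ∘ φ` forward along `φ` gives the density `g`. -/
theorem map_withDensity_comp_s19 {α β : Type*} [MeasurableSpace α] [MeasurableSpace β]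
    (μ : Measure α) {φ : α → β} (hφ : Measurable φ) {g : β → ℝ≥0∞} (hg : Measurable g) :
    (μ.withDensity fun a => g (φ a)).map φ = (μ.map φ).withDensity g := by
  ext s hs
  rw [Measure.map_apply hφ hs, withDensity_apply _ (hφ hs), withDensity_apply _ hs,
    setLIntegral_map hs hg hφ]

/-- The map `(t, r) ↦ (t + r, t - r)` halves Lebesgue measure on the plane. -/
theorem map_add_sub_volume :
    (volume : Measure (ℝ × ℝ)).map (fun q => (q.1 + q.2, q.1 - q.2)) =
      ENNReal.ofReal (1 / 2) • volume := by
  let A : Matrix (Fin 2) (Fin 2) ℝ := !![1, 1; 1, -1]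
  let L := Matrix.toLin (Module.Basis.finTwoProd ℝ) (Module.Basis.finTwoProd ℝ) A
  have hdet : LinearMap.det L = -2 := by
    rw [LinearMap.det_toLin, Matrix.det_fin_two_of]
    norm_num
  have hL : (fun q : ℝ × ℝ => (q.1 + q.2, q.1 - q.2)) = L := by
    funext q
    simp only [L, A, Matrix.toLin_finTwoProd_apply]
    simp [sub_eq_add_neg]
  rw [hL, Measure.map_linearMap_addHaar_eq_smul_addHaar volume (by rw [hdet]; norm_num), hdet]
  norm_num

open Set Module in
/-- The image of Lebesgue measure under the eigenvalue map `(t, x) ↦ (t + ‖x‖, t - ‖x‖)`. -/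
theorem map_eigenvalues_volume {E : Type*} [NormedAddCommGroup E] [InnerProductSpace ℝ E]
    [Nontrivial E] [FiniteDimensional ℝ E] [MeasurableSpace E] [BorelSpace E] :
    (volume : Measure (ℝ × E)).map (fun p => (p.1 + ‖p.2‖, p.1 - ‖p.2‖)) =
      ((volume : Measure E).toSphere univ * ENNReal.ofReal (1 / 2)) •
        (volume : Measure (ℝ × ℝ)).withDensity fun ξ =>
          {ξ : ℝ × ℝ | ξ.2 < ξ.1}.indicator
            (fun ξ => ENNReal.ofReal (((ξ.1 - ξ.2) / 2) ^ (finrank ℝ E - 1))) ξ := by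
  have hm : MeasurableSet {ξ : ℝ × ℝ | ξ.2 < ξ.1} := measurableSet_lt measurable_snd measurable_fst
  have hd : Measurable fun ξ : ℝ × ℝ => {ξ : ℝ × ℝ | ξ.2 < ξ.1}.indicator
      (fun ξ => ENNReal.ofReal (((ξ.1 - ξ.2) / 2) ^ (finrank ℝ E - 1))) ξ :=
    Measurable.indicator (by fun_prop) hm
  have hφ : Measurable fun p : ℝ × E => (p.1 + ‖p.2‖, p.1 - ‖p.2‖) := by fun_prop
  have hψ : Measurable fun q : ℝ × ℝ => (q.1 + q.2, q.1 - q.2) := by fun_prop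
  refine Measure.ext_of_lintegral _ fun G hG => ?_
  have key : ∀ H : ℝ × ℝ → ℝ≥0∞, Measurable H →
      ∫⁻ t : ℝ, ∫⁻ r : ℝ, H (t + r, t - r) = ENNReal.ofReal (1 / 2) * ∫⁻ ξ, H ξ := by
    intro H hH
    rw [← smul_eq_mul, ← lintegral_smul_measure, ← map_add_sub_volume, lintegral_map hH hψ,
      Measure.volume_eq_prod]
    exact (lintegral_prod _ (hH.comp hψ).aemeasurable).symm
  rw [lintegral_map hG hφ, lintegral_smul_measure,
    lintegral_withDensity_eq_lintegral_mul _ hd hG, smul_eq_mul, mul_assoc,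
    ← key _ (hd.mul hG), Measure.volume_eq_prod,
    lintegral_prod (fun p : ℝ × E => G (p.1 + ‖p.2‖, p.1 - ‖p.2‖)) (hG.comp hφ).aemeasurable,
    ← lintegral_const_mul]
  · refine lintegral_congr fun t => ?_
    rw [lintegral_fun_norm_addHaar volume (f := fun r => G (t + r, t - r)) (by fun_prop),
      ← lintegral_indicator measurableSet_Ioi]
    congr 1
    refine lintegral_congr fun r => ?_
    by_cases hr : 0 < r
    · have h1 : t - r < t + r := by linarith
      simp [indicator, hr, h1]
    · have h1 : ¬ t - r < t + r := by linarith
      simp [indicator, hr, h1]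
  · exact ((hd.mul hG).comp hψ).lintegral_prod_right'

open Classical in
/-- Joint density of the ordered eigenvalues of the Lorentz Wishart distribution
`𝕃W_n(η, e)`: with `W` the measure on `ℝ × ℝ^{n−1}` with density
`(t, x) ↦ exp(−t)·(t² − ‖x‖²)^{η/2−n/2}·1_{t > ‖x‖}` with respect to Lebesgue measure,
the pushforward of `W` under the eigenvalue map `(t, x) ↦ (t + ‖x‖, t − ‖x‖)` has density
`(ξ₁, ξ₂) ↦ c · 1_{ξ₁ > ξ₂ > 0} · exp(−(ξ₁+ξ₂)/2) · (ξ₁ξ₂)^{η/2−n/2} · (ξ₁−ξ₂)^{n−2}`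
with respect to Lebesgue measure on `ℝ²`, for some constant `c > 0`. -/
theorem lorentz_wishart_eigenvalue_density (n : ℕ) (hn : 2 < n) (η : ℝ)
    (hη : (n : ℝ) - 2 < η) :
    ∃ c : ℝ, 0 < c ∧
      ((volume : Measure (ℝ × EuclideanSpace ℝ (Fin (n - 1)))).withDensity
          (fun p => ENNReal.ofReal
            (if ‖p.2‖ < p.1 then
              Real.exp (-p.1) * (p.1 ^ 2 - ‖p.2‖ ^ 2) ^ (η / 2 - (n : ℝ) / 2)
            else 0))).map
        (fun p : ℝ × EuclideanSpace ℝ (Fin (n - 1)) => ((p.1 + ‖p.2‖, p.1 - ‖p.2‖) : ℝ × ℝ)) =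
      (volume : Measure (ℝ × ℝ)).withDensity fun ξ => ENNReal.ofReal
        (if 0 < ξ.2 ∧ ξ.2 < ξ.1 then
          c * Real.exp (-(ξ.1 + ξ.2) / 2) * (ξ.1 * ξ.2) ^ (η / 2 - (n : ℝ) / 2) *
            (ξ.1 - ξ.2) ^ ((n : ℝ) - 2)
        else 0) := by
  obtain ⟨m, rfl⟩ : ∃ m, n = m + 2 := ⟨n - 2, by omega⟩
  have hm : 0 < m := by omega
  let E := EuclideanSpace ℝ (Fin (m + 2 - 1))
  have hdim : Module.finrank ℝ E - 1 = m := by simp [E]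
  have : Nontrivial E := Module.nontrivial_of_finrank_pos (R := ℝ) (by omega)
  set a : ℝ := η / 2 - ((m + 2 : ℕ) : ℝ) / 2
  set C : ℝ := (volume : Measure E).toSphere.real Set.univ
  have hC : 0 < C := by
    have : NeZero (volume : Measure E).toSphere := ⟨Measure.toSphere_ne_zero _⟩
    exact measureReal_univ_pos
  have hC' : (volume : Measure E).toSphere Set.univ = ENNReal.ofReal C :=
    (ofReal_measureReal).symm
  let g : ℝ × ℝ → ℝ≥0∞ := {ξ : ℝ × ℝ | 0 < ξ.2}.indicator fun ξ =>
    ENNReal.ofReal (Real.exp (-((ξ.1 + ξ.2) / 2)) * (ξ.1 * ξ.2) ^ a)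
  have hg : Measurable g :=
    Measurable.indicator (by fun_prop) (measurableSet_lt measurable_const measurable_snd)
  have hms : MeasurableSet {ξ : ℝ × ℝ | ξ.2 < ξ.1} := measurableSet_lt measurable_snd measurable_fst
  have hW : (fun p : ℝ × E => ENNReal.ofReal (if ‖p.2‖ < p.1 then
      Real.exp (-p.1) * (p.1 ^ 2 - ‖p.2‖ ^ 2) ^ a else 0)) =
      fun p => g (p.1 + ‖p.2‖, p.1 - ‖p.2‖) := by
    funext p
    have h2 : (p.1 + ‖p.2‖) * (p.1 - ‖p.2‖) = p.1 ^ 2 - ‖p.2‖ ^ 2 := by ring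
    by_cases h : ‖p.2‖ < p.1 <;> simp [g, h, h2]
  refine ⟨C * (1 / 2) * (1 / 2) ^ m, by positivity, ?_⟩
  rw [hW, map_withDensity_comp_s19 _ (by fun_prop) hg, map_eigenvalues_volume, hC', hdim,
    withDensity_smul_measure, ← withDensity_mul _ (Measurable.indicator (by fun_prop) hms) hg,
    ← withDensity_smul _ ((Measurable.indicator (by fun_prop) hms).mul hg)]
  congr 1
  funext ξ
  have hexp : ((m + 2 : ℕ) : ℝ) - 2 = (m : ℝ) := by push_cast; ring
  simp only [Pi.smul_apply, Pi.mul_apply, smul_eq_mul, g, Set.indicator, Set.mem_ofPred_eq, hexp,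
    Real.rpow_natCast]
  by_cases h2 : 0 < ξ.2
  · by_cases h1 : ξ.2 < ξ.1
    · have h3 : 0 < ξ.1 - ξ.2 := sub_pos.2 h1
      simp only [h1, h2, and_self, if_true]
      rw [← ENNReal.ofReal_mul hC.le, ← ENNReal.ofReal_mul (by positivity),
        ← ENNReal.ofReal_mul (by positivity)]
      congr 1
      rw [div_eq_mul_one_div (ξ.1 - ξ.2), mul_pow, neg_div]
      ring
    · simp [h1]
  · simp [h2]
end
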